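/- arXiv:1309.4833 — 11 statements merged into one kernel-verified Lean document; each statement's English description precedes it below -/
import Mathlib

section
/- For every n ≥ 1, the tensor rank of the n-copy three-qubit W tensor W_n is at most C(n+2, 2) · 2^n, where C(n+2,2) is the binomial coefficient (n+2 choose 2). -/
/-- The unnormalized n-copy three-qubit W tensor: entry 1 at (i,j,k) if at every
position exactly one of the bits of i, j, k equals 1, and 0 otherwise. -/
noncomputable def Wtensor (n : ℕ) (i j k : Fin n → Bool) : ℂ :=
  if ∀ t, (if i t then 1 else 0) + (if j t then 1 else 0) + (if k t then (1 : ℕ) else 0) = 1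
  then 1 else 0

/-- Hamming weight. -/
def wtW {n : ℕ} (i : Fin n → Bool) : ℕ := ∑ t, (if i t then 1 else 0)

/-- Support factor. -/
noncomputable def gW (x b : Bool) : ℂ := if x = true ∧ b = false then 0 else 1

/-- Sign factor. -/
noncomputable def sgW (b : Bool) : ℂ := if b then 1 else -1

abbrev IW (n : ℕ) : Type := (Σ m : Fin (n + 1), Fin (m.val + 1)) × (Fin n → Bool)

lemma card_IW (n : ℕ) : Fintype.card (IW n) = (n + 2).choose 2 * 2 ^ n := by
  have h : ∀ n : ℕ, ∑ m ∈ Finset.range (n + 1), (m + 1) = (n + 2).choose 2 := by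
    intro n
    induction n with
    | zero => simp
    | succ k ih =>
      rw [Finset.sum_range_succ, ih, Nat.choose_succ_succ' (k + 2) 1, Nat.choose_one_right]
      ring
  rw [Fintype.card_prod, Fintype.card_sigma]
  simp only [Fintype.card_fin, Fintype.card_pi, Fintype.card_bool, Finset.prod_const,
    Finset.card_univ]
  rw [Fin.sum_univ_eq_sum_range (fun m => m + 1) (n + 1), h]

lemma sum_sigma_W (n p q r : ℕ) :
    (∑ s : (Σ m : Fin (n + 1), Fin (m.val + 1)),
      (if p = s.2.val then (1 : ℂ) else 0) * (if q + s.2.val = s.1.val then 1 else 0)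
        * (if r + s.1.val = n then 1 else 0)) = if p + q + r = n then 1 else 0 := by
  split_ifs with h
  · rw [Finset.sum_eq_single (⟨⟨p + q, by omega⟩, ⟨p, by simp⟩⟩ :
      (Σ m : Fin (n + 1), Fin (m.val + 1)))]
    · have h1 : q + p = p + q := by omega
      have h2 : r + (p + q) = n := by omega
      simp [h1, h2]
    · rintro ⟨⟨m, hm⟩, ⟨a, ha⟩⟩ _ hne
      by_cases h1 : p = a
      · subst h1
        by_cases h2 : q + p = m
        · subst h2
          exfalso
          apply hne
          have : q + p = p + q := by omega
          congr 1
          · simp [this]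
          · congr!
        · simp [h2]
      · simp [h1]
    · simp
  · apply Finset.sum_eq_zero
    rintro ⟨⟨m, hm⟩, ⟨a, ha⟩⟩ _
    simp only
    split_ifs <;> first | (exfalso; omega) | simp

lemma sum_S_W (n : ℕ) (i j k : Fin n → Bool) :
    (∑ S : Fin n → Bool, (∏ t, sgW (S t)) * (∏ t, gW (i t) (S t)) * (∏ t, gW (j t) (S t))
      * (∏ t, gW (k t) (S t))) = if ∀ t, (i t || j t || k t) = true then 1 else 0 := by
  simp only [← Finset.prod_mul_distrib]
  rw [← Fintype.piFinset_univ, ← Finset.prod_univ_sum (fun _ => Finset.univ)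
    (fun t b => sgW b * gW (i t) b * gW (j t) b * gW (k t) b)]
  have : ∀ t, (∑ b : Bool, sgW b * gW (i t) b * gW (j t) b * gW (k t) b)
      = if (i t || j t || k t) = true then 1 else 0 := by
    intro t
    rw [Fintype.sum_bool]
    cases i t <;> cases j t <;> cases k t <;> simp [sgW, gW]
  simp only [this]
  rw [Finset.prod_ite_zero]
  simp

lemma W_eq (n : ℕ) (i j k : Fin n → Bool) : Wtensor n i j k =
    (if wtW i + wtW j + wtW k = n then 1 else 0) *
      (if ∀ t, (i t || j t || k t) = true then 1 else 0) := by
  unfold Wtensor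
  rw [ite_zero_mul_ite_zero, mul_one]
  refine if_congr ?_ rfl rfl
  have hs : wtW i + wtW j + wtW k = ∑ t, ((if i t then 1 else 0) + (if j t then 1 else 0)
      + (if k t then (1 : ℕ) else 0)) := by
    simp only [wtW, Finset.sum_add_distrib]
  have hn : n = ∑ _t : Fin n, 1 := by simp
  constructor
  · intro h
    refine ⟨?_, fun t => ?_⟩
    · rw [hs, Finset.sum_congr rfl (fun t _ => h t)]; simp
    · have := h t
      revert this
      cases i t <;> cases j t <;> cases k t <;> simp
  · rintro ⟨h1, h2⟩ t
    have hle : ∀ t ∈ Finset.univ, 1 ≤ ((if i t then 1 else 0) + (if j t then 1 else 0)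
      + (if k t then (1 : ℕ) else 0)) := by
      intro t _
      have := h2 t
      revert this
      cases i t <;> cases j t <;> cases k t <;> simp
    have := (Finset.sum_eq_sum_iff_of_le hle).1 (by rw [← hs, h1]; simp)
    exact (this t (Finset.mem_univ t)).symm

/-- for every n ≥ 1, the tensor rank of W_n is at most
C(n+2, 2) · 2^n, i.e. W_n admits a decomposition with that many product terms. -/
theorem Wtensor_rank_le (n : ℕ) (hn : 1 ≤ n) :
    ∃ u v w : Fin ((n + 2).choose 2 * 2 ^ n) → (Fin n → Bool) → ℂ,
      ∀ i j k, Wtensor n i j k = ∑ t, u t i * v t j * w t k := by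
  let e : Fin ((n + 2).choose 2 * 2 ^ n) ≃ IW n := (Fintype.equivFinOfCardEq (card_IW n)).symm
  let U : IW n → (Fin n → Bool) → ℂ := fun s i =>
    (if wtW i = s.1.2.val then (1 : ℂ) else 0) * ((∏ t, sgW (s.2 t)) * ∏ t, gW (i t) (s.2 t))
  let V : IW n → (Fin n → Bool) → ℂ := fun s j =>
    (if wtW j + s.1.2.val = s.1.1.val then (1 : ℂ) else 0) * ∏ t, gW (j t) (s.2 t)
  let X : IW n → (Fin n → Bool) → ℂ := fun s k =>
    (if wtW k + s.1.1.val = n then (1 : ℂ) else 0) * ∏ t, gW (k t) (s.2 t)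
  refine ⟨fun t => U (e t), fun t => V (e t), fun t => X (e t), fun i j k => ?_⟩
  rw [Equiv.sum_comp e (fun s => U s i * V s j * X s k), W_eq, ← sum_sigma_W, ← sum_S_W,
    Finset.sum_mul_sum, Fintype.sum_prod_type]
  refine Finset.sum_congr rfl fun a _ => Finset.sum_congr rfl fun S _ => ?_
  simp only [U, V, X]
  ring
end

section
/- For every N ≥ 2 and every n ≥ 1, the tensor rank of the n-copy N-partite W tensor W_{N,n} is at most C(n+N−1, N−1) · 2^n, where C(n+N−1, N−1) is the binomial coefficient (n+N−1 choose N−1). (Consequently, GHZ_N^{⊗m} can be transformed into W_N^{⊗n} by SLOCC whenever 2^m ≥ C(n+N−1, N−1) · 2^n.) -/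
/-- The unnormalized n-copy N-partite W tensor: entry 1 at (i⁽¹⁾,…,i⁽ᴺ⁾) if at every
position 1 ≤ t ≤ n exactly one of the bits i⁽¹⁾_t,…,i⁽ᴺ⁾_t equals 1, and 0 otherwise. -/
noncomputable def WN (N n : ℕ) (x : Fin N → Fin n → Bool) : ℂ :=
  if ∀ t, (Finset.univ.filter fun p => x p t = true).card = 1 then 1 else 0

theorem WN_aux_sum (N n : ℕ) (x : Fin N → Fin n → Bool) :
    WN N n x = (∑ w ∈ Finset.piAntidiag (Finset.univ : Finset (Fin N)) n,
        ∏ p, (if (Finset.univ.filter fun t => x p t = true).card = w p then (1:ℂ) else 0)) *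
      ∑ S : Finset (Fin n), (-1 : ℂ) ^ S.card * ∏ p, (if ∀ t ∈ S, x p t = false then (1:ℂ) else 0) := by
  have h1 : (∑ w ∈ Finset.piAntidiag (Finset.univ : Finset (Fin N)) n,
        ∏ p, (if (Finset.univ.filter fun t => x p t = true).card = w p then (1:ℂ) else 0))
      = if ∑ p, (Finset.univ.filter fun t => x p t = true).card = n then 1 else 0 := by
    have : ∀ w : Fin N → ℕ,
        ∏ p, (if (Finset.univ.filter fun t => x p t = true).card = w p then (1:ℂ) else 0)
        = if (fun p => (Finset.univ.filter fun t => x p t = true).card) = w then 1 else 0 := by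
      intro w
      rw [Finset.prod_ite_zero]
      simp [funext_iff]
    simp only [this, Finset.sum_ite_eq, Finset.mem_piAntidiag]
    simp
  have h2 : (∑ S : Finset (Fin n), (-1 : ℂ) ^ S.card *
        ∏ p, (if ∀ t ∈ S, x p t = false then (1:ℂ) else 0))
      = if ∀ t, ∃ p, x p t = true then 1 else 0 := by
    have h3 : ∏ t : Fin n, ((-1 : ℂ) * (if ∀ p, x p t = false then 1 else 0) + 1)
        = if ∀ t, ∃ p, x p t = true then 1 else 0 := by
      have : ∀ t : Fin n, ((-1 : ℂ) * (if ∀ p, x p t = false then 1 else 0) + 1)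
          = if ∃ p, x p t = true then 1 else 0 := by
        intro t
        by_cases h : ∃ p, x p t = true
        · have h' : ¬ ∀ p, x p t = false := by
            obtain ⟨p, hp⟩ := h
            intro h; simp [h p] at hp
          simp only [if_pos h, if_neg h']; norm_num
        · have h' : ∀ p, x p t = false := by simpa using h
          rw [if_neg h, if_pos h']; norm_num
      simp only [this]
      rw [Finset.prod_ite_zero]
      simp
    rw [← h3, Finset.prod_add, Finset.powerset_univ]
    refine Finset.sum_congr rfl fun S _ => ?_
    rw [Finset.prod_mul_distrib, Finset.prod_const, Finset.prod_const_one, mul_one,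
      Finset.prod_ite_zero, Finset.prod_ite_zero]
    congr 1
    simp only [Finset.mem_univ, true_imp_iff, Finset.prod_const_one]
    exact if_congr ⟨fun h t ht p => h p t ht, fun h p t ht => h t ht p⟩ rfl rfl
  rw [h1, h2]
  have h4 : ∑ p, (Finset.univ.filter fun t => x p t = true).card
      = ∑ t, (Finset.univ.filter fun p => x p t = true).card := by
    simp only [Finset.card_filter]
    exact Finset.sum_comm
  rw [h4, WN, ite_zero_mul_ite_zero]
  simp only [mul_one]
  refine if_congr ?_ rfl rfl
  have h5 : (∀ t, ∃ p, x p t = true) ↔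
      ∀ t, 1 ≤ (Finset.univ.filter fun p => x p t = true).card := by
    refine forall_congr' fun t => ?_
    rw [Nat.one_le_iff_ne_zero, ← Nat.pos_iff_ne_zero, Finset.card_pos]
    simp [Finset.Nonempty]
  rw [h5]
  constructor
  · intro h
    exact ⟨by simp [h], fun t => (h t).ge⟩
  · rintro ⟨h, h'⟩ t
    have := (Finset.sum_eq_sum_iff_of_le (s := Finset.univ) (f := fun _ : Fin n => 1)
      (fun t _ => h' t)).1 (by simp [h])
    exact (this t (Finset.mem_univ t)).symm

/-- for N ≥ 2 and n ≥ 1, the tensor rank of W_{N,n} is at most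
C(n+N−1, N−1) · 2^n, i.e. W_{N,n} admits a decomposition with that many product terms. -/
theorem WN_rank_le (N n : ℕ) (hN : 2 ≤ N) (hn : 1 ≤ n) :
    ∃ u : Fin ((n + N - 1).choose (N - 1) * 2 ^ n) → Fin N → (Fin n → Bool) → ℂ,
      ∀ x : Fin N → Fin n → Bool, WN N n x = ∑ t, ∏ p, u t p (x p) := by
  have hc : Fintype.card ((Finset.piAntidiag (Finset.univ : Finset (Fin N)) n) × Finset (Fin n))
      = (n + N - 1).choose (N - 1) * 2 ^ n := by
    rw [Fintype.card_prod, Fintype.card_coe, ← Finset.map_sym_eq_piAntidiag, Finset.card_map, Finset.sym_univ,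
      Finset.card_univ, Sym.card_sym_eq_choose, Fintype.card_finset]
    simp only [Fintype.card_fin]
    congr 1
    rw [add_comm N n]
    exact Nat.choose_symm_of_eq_add (by omega)
  let e := (Fintype.equivFinOfCardEq hc).symm
  let p0 : Fin N := ⟨0, by omega⟩
  refine ⟨fun i p y =>
    (if (Finset.univ.filter fun t => y t = true).card = (e i).1.1 p then (1:ℂ) else 0) *
    ((if p = p0 then (-1 : ℂ) ^ (e i).2.card else 1) *
      (if ∀ t ∈ (e i).2, y t = false then (1:ℂ) else 0)), fun x => ?_⟩
  rw [WN_aux_sum, ← Finset.sum_coe_sort, Finset.sum_mul_sum, ← Fintype.sum_prod_type',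
    ← Equiv.sum_comp e]
  refine Finset.sum_congr rfl fun i _ => ?_
  rw [Finset.prod_mul_distrib, Finset.prod_mul_distrib, Finset.prod_ite_eq']
  simp
end

section
/- For every N ≥ 2, the limit as n → ∞ of (log₂ rk(W_{N,n})) / n exists and equals 1, where rk denotes tensor rank. (Since a state is reachable from GHZ_N^{⊗m} = Σ_{l∈{0,1}^m}|l⟩^{⊗N} by SLOCC if and only if its tensor rank is at most 2^m, this says exactly that the SLOCC entanglement transformation rate R(GHZ_N, W_N) = 1; for N = 3 this is R(|GHZ⟩, |W⟩) = 1.) -/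
/-- The tensor rank of W_{N,n}: the least r admitting a rank-r decomposition. -/
noncomputable def rkWN (N n : ℕ) : ℕ :=
  sInf {r : ℕ | ∃ u : Fin r → Fin N → (Fin n → Bool) → ℂ,
    ∀ x : Fin N → Fin n → Bool, WN N n x = ∑ t, ∏ p, u t p (x p)}

theorem rkWN_le_aux {N n : ℕ} (p0 : Fin N) {ι : Type*} [Fintype ι] (c : ι → ℂ)
    (u : ι → Fin N → (Fin n → Bool) → ℂ)
    (h : ∀ x : Fin N → Fin n → Bool, WN N n x = ∑ i, c i * ∏ p, u i p (x p)) :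
    Fintype.card ι ∈ {r : ℕ | ∃ u : Fin r → Fin N → (Fin n → Bool) → ℂ,
    ∀ x : Fin N → Fin n → Bool, WN N n x = ∑ t, ∏ p, u t p (x p)} := by
  let e := (Fintype.equivFin ι).symm
  refine ⟨fun t p v => (if p = p0 then c (e t) else 1) * u (e t) p v, fun x => ?_⟩
  rw [h x, ← e.sum_comp]
  refine Finset.sum_congr rfl fun t _ => ?_
  rw [Finset.prod_mul_distrib, Finset.prod_ite_eq' Finset.univ p0]
  simp

theorem exists_extract (K : ℕ) (hK : K ≠ 0) :
    ∃ v : Fin K → ℂ, (∀ k, v k ≠ 0) ∧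
      ∀ d < K, (∑ k, (1 / (K : ℂ)) * v k ^ d) = if d = 0 then 1 else 0 := by
  have hz := Complex.isPrimitiveRoot_exp K hK
  set z := Complex.exp (2 * Real.pi * Complex.I / K)
  have hK' : (K : ℂ) ≠ 0 := by exact_mod_cast hK
  refine ⟨fun k => z ^ (k : ℕ), fun k => pow_ne_zero _ (hz.ne_zero hK), fun d hd => ?_⟩
  rw [← Finset.mul_sum]
  split_ifs with h0
  · subst h0
    simp [hK']
  · have h1 : z ^ d ≠ 1 := hz.pow_ne_one_of_pos_of_lt h0 hd
    have h2 : ∑ k : Fin K, (z ^ (k : ℕ)) ^ d = ∑ k ∈ Finset.range K, (z ^ d) ^ k := by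
      rw [Finset.sum_range]
      refine Finset.sum_congr rfl fun k _ => ?_
      rw [← pow_mul, ← pow_mul, mul_comm]
    rw [h2, geom_sum_eq h1, ← pow_mul, mul_comm d K, pow_mul, hz.pow_eq_one]
    simp

theorem WN_eq (N n : ℕ) (v : Fin (n * N + 1) → ℂ) (hv : ∀ k, v k ≠ 0)
    (h : ∀ d < n * N + 1, (∑ k, (1 / ((n * N + 1 : ℕ) : ℂ)) * v k ^ d) = if d = 0 then 1 else 0)
    (x : Fin N → Fin n → Bool) :
    WN N n x = ∑ i : Fin (n * N + 1) × Finset (Fin n),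
      ((1 / ((n * N + 1 : ℕ) : ℂ)) * (v i.1)⁻¹ ^ n * (-1) ^ (i.2ᶜ).card) *
        ∏ p, ((∏ t ∈ i.2, if x p t then v i.1 else 1) *
          ∏ t ∈ i.2ᶜ, if x p t then 0 else 1) := by
  set m : Fin n → ℕ := fun t => (Finset.univ.filter fun p => x p t = true).card with hm
  have key : ∀ k : Fin (n * N + 1), ∀ s : Finset (Fin n),
      (-1) ^ (sᶜ).card * ∏ p, ((∏ t ∈ s, if x p t then v k else 1) *
          ∏ t ∈ sᶜ, if x p t then (0 : ℂ) else 1) =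
      (∏ t ∈ s, v k ^ m t) * ∏ t ∈ sᶜ, -(if m t = 0 then (1 : ℂ) else 0) := by
    intro k s
    rw [Finset.prod_mul_distrib, Finset.prod_comm, Finset.prod_comm (t := sᶜ), Finset.prod_neg]
    have e1 : ∀ t, (∏ p, if x p t then v k else 1) = v k ^ m t := by
      intro t
      rw [Finset.prod_ite]
      simp [hm]
    have e2 : ∀ t, (∏ p, if x p t then (0 : ℂ) else 1) = if m t = 0 then (1 : ℂ) else 0 := by
      intro t
      rw [Finset.prod_ite]
      simp [hm, zero_pow_eq]
    simp only [e1, e2]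
    ring
  have key2 : ∀ k : Fin (n * N + 1),
      ∑ s : Finset (Fin n), ((1 / ((n * N + 1 : ℕ) : ℂ)) * (v k)⁻¹ ^ n * (-1) ^ (sᶜ).card) *
        ∏ p, ((∏ t ∈ s, if x p t then v k else 1) *
          ∏ t ∈ sᶜ, if x p t then 0 else 1) =
      (1 / ((n * N + 1 : ℕ) : ℂ)) *
        ∏ t, ((v k)⁻¹ * (v k ^ m t + -(if m t = 0 then (1 : ℂ) else 0))) := by
    intro k
    rw [Finset.prod_mul_distrib, Fintype.prod_add, Finset.prod_const, Finset.card_univ,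
      Fintype.card_fin, ← mul_assoc, Finset.mul_sum]
    refine Finset.sum_congr rfl fun s _ => ?_
    rw [mul_assoc, key]
  rw [Fintype.sum_prod_type]
  simp only [key2]
  by_cases h0 : ∃ t, m t = 0
  · obtain ⟨t, ht⟩ := h0
    have : WN N n x = 0 := by
      unfold WN
      rw [if_neg]
      intro hh
      have := hh t
      simp only [hm] at ht
      omega
    rw [this]
    symm
    refine Finset.sum_eq_zero fun k _ => ?_
    rw [Finset.prod_eq_zero (Finset.mem_univ t)]
    · simp
    · simp [ht]
  · push Not at h0
    have e : ∀ k, ∏ t, ((v k)⁻¹ * (v k ^ m t + -(if m t = 0 then (1 : ℂ) else 0))) =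
        v k ^ (∑ t, (m t - 1)) := by
      intro k
      rw [← Finset.prod_pow_eq_pow_sum]
      refine Finset.prod_congr rfl fun t _ => ?_
      obtain ⟨j, hj⟩ := Nat.exists_eq_succ_of_ne_zero (h0 t)
      have := hv k
      rw [if_neg (h0 t), hj]
      simp only [Nat.succ_eq_add_one, Nat.add_sub_cancel, pow_succ]
      field_simp
      ring
    simp only [e]
    rw [h]
    · unfold WN
      congr 1
      simp only [Finset.sum_eq_zero_iff, Finset.mem_univ, true_implies]
      refine propext (forall_congr' fun t => ?_)
      have := h0 t
      simp only [hm] at this ⊢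
      omega
    · have : ∑ t, (m t - 1) ≤ ∑ t : Fin n, N := by
        refine Finset.sum_le_sum fun t _ => ?_
        have : m t ≤ N := by
          simpa [hm] using Finset.card_le_univ (Finset.univ.filter fun p => x p t = true)
        omega
      simp at this
      omega

theorem WN_mem (N n : ℕ) (hN : 2 ≤ N) :
    (n * N + 1) * 2 ^ n ∈ {r : ℕ | ∃ u : Fin r → Fin N → (Fin n → Bool) → ℂ,
    ∀ x : Fin N → Fin n → Bool, WN N n x = ∑ t, ∏ p, u t p (x p)} := by
  obtain ⟨v, hv, h⟩ := exists_extract (n * N + 1) (by omega)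
  have := rkWN_le_aux (n := n) (⟨0, by omega⟩ : Fin N)
    (fun i : Fin (n * N + 1) × Finset (Fin n) =>
      (1 / ((n * N + 1 : ℕ) : ℂ)) * (v i.1)⁻¹ ^ n * (-1) ^ (i.2ᶜ).card)
    (fun i _ y => ((∏ t ∈ i.2, if y t then v i.1 else 1) *
          ∏ t ∈ i.2ᶜ, if y t then 0 else 1)) (WN_eq N n v hv h)
  simpa only [Fintype.card_prod, Fintype.card_fin, Fintype.card_finset] using this

theorem WN_lower (N n r : ℕ) (hN : 2 ≤ N) (u : Fin r → Fin N → (Fin n → Bool) → ℂ)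
    (hu : ∀ x : Fin N → Fin n → Bool, WN N n x = ∑ t, ∏ p, u t p (x p)) : 2 ^ n ≤ r := by
  obtain ⟨M, rfl⟩ := Nat.exists_eq_add_of_le' hN
  let A : Matrix (Fin n → Bool) (Fin r) ℂ := fun a t => u t 0 a
  let B : Matrix (Fin r) (Fin n → Bool) ℂ := fun t b =>
    u t 1 (fun s => !b s) * ∏ p : Fin M, u t p.succ.succ (fun _ => false)
  have hAB : A * B = 1 := by
    ext a b
    have := hu (Fin.cons a (Fin.cons (fun s => !b s) (fun _ _ => false)))
    simp only [Fin.prod_univ_succ, Fin.cons_zero, Fin.cons_succ] at this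
    rw [Matrix.mul_apply]
    refine this.symm.trans ?_
    unfold WN
    rw [Matrix.one_apply]
    congr 1
    simp only [Finset.card_filter, Fin.sum_univ_succ, Fin.cons_zero, Fin.cons_succ]
    rw [funext_iff]
    refine propext (forall_congr' fun t => ?_)
    cases a t <;> cases b t <;> simp
  have h1 := Matrix.rank_mul_le_left A B
  rw [hAB, Matrix.rank_one] at h1
  have h2 := h1.trans A.rank_le_card_width
  simpa using h2

/-- for every N ≥ 2, lim_{n→∞} (log₂ rk(W_{N,n})) / n = 1.
(Equivalently, the SLOCC entanglement transformation rate R(GHZ_N, W_N) = 1.) -/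
theorem log_rank_WN_div_n_tendsto_one (N : ℕ) (hN : 2 ≤ N) :
    Filter.Tendsto (fun n : ℕ => Real.logb 2 (rkWN N n) / n) Filter.atTop (nhds 1) := by
  have hlow : ∀ n, 2 ^ n ≤ rkWN N n := by
    intro n
    obtain ⟨u, hu⟩ := Nat.sInf_mem (⟨_, WN_mem N n hN⟩ : Set.Nonempty _)
    exact WN_lower N n _ hN u hu
  have hup : ∀ n, rkWN N n ≤ (n * N + 1) * 2 ^ n := fun n => Nat.sInf_le (WN_mem N n hN)
  have hlim : Filter.Tendsto (fun n : ℕ => 1 + (Real.log n / n + Real.log (N + 1) / n) / Real.log 2)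
      Filter.atTop (nhds 1) := by
    have a1 : Filter.Tendsto (fun n : ℕ => Real.log n / n) Filter.atTop (nhds 0) :=
      (Real.isLittleO_log_id_atTop.tendsto_div_nhds_zero).comp tendsto_natCast_atTop_atTop
    have a2 : Filter.Tendsto (fun n : ℕ => Real.log (N + 1) / (n : ℝ)) Filter.atTop (nhds 0) :=
      tendsto_const_div_atTop_nhds_zero_nat _
    simpa using ((a1.add a2).div_const (Real.log 2)).const_add 1
  have hl2 : 0 < Real.log 2 := Real.log_pos (by norm_num)
  refine tendsto_of_tendsto_of_tendsto_of_le_of_le' tendsto_const_nhds hlim ?_ ?_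
  · filter_upwards [Filter.eventually_gt_atTop 0] with n hn
    have hn' : (0 : ℝ) < n := by exact_mod_cast hn
    have h1 : (2 : ℝ) ^ n ≤ rkWN N n := by exact_mod_cast hlow n
    have h2 := Real.log_le_log (by positivity) h1
    rw [Real.log_pow] at h2
    rw [le_div_iff₀ hn', Real.logb, le_div_iff₀ hl2]
    linarith
  · filter_upwards [Filter.eventually_gt_atTop 0] with n hn
    have hn' : (0 : ℝ) < n := by exact_mod_cast hn
    have hn1 : (1 : ℝ) ≤ n := by exact_mod_cast hn
    have h0 : (2 : ℝ) ^ n ≤ rkWN N n := by exact_mod_cast hlow n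
    have h1 : (rkWN N n : ℝ) ≤ (n * N + 1) * 2 ^ n := by exact_mod_cast hup n
    have h3 : (rkWN N n : ℝ) ≤ n * (N + 1) * 2 ^ n :=
      h1.trans (mul_le_mul_of_nonneg_right (by linarith) (by positivity))
    have h2 := Real.log_le_log (lt_of_lt_of_le (by positivity) h0) h3
    rw [Real.log_mul (by positivity) (by positivity), Real.log_mul (by positivity) (by positivity),
      Real.log_pow] at h2
    rw [div_le_iff₀ hn', Real.logb, div_le_iff₀ hl2]
    refine h2.trans (le_of_eq ?_)
    field_simp
    ring
end

section
/- Let d ≥ 2 and j_1 ≥ ⋯ ≥ j_d ≥ 1 with N = j_1 + ⋯ + j_d. For every n ≥ 1, the tensor rank of D(j_1,…,j_d)^{⊗n} is at most ∏_{k=2}^d C(n·j_k + N − 1, N − 1) · (j_k + 1)^n, where C(·,·) denotes a binomial coefficient. -/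
/-- The unnormalized Dicke tensor D(j_1,…,j_d): the N-party tensor over ({1,…,d})^N whose
entry at (s_1,…,s_N) is 1 if for every symbol i the number of parties p with s_p = i
equals j_i, and 0 otherwise. -/
noncomputable def Dicke (d : ℕ) (j : Fin d → ℕ) (N : ℕ) (s : Fin N → Fin d) : ℂ :=
  if ∀ i, (Finset.univ.filter fun p => s p = i).card = j i then 1 else 0

/-- The n-th tensor power D(j_1,…,j_d)^{⊗n}. -/
noncomputable def DickePow (d : ℕ) (j : Fin d → ℕ) (N n : ℕ)
    (α : Fin N → Fin n → Fin d) : ℂ :=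
  ∏ t, Dicke d j N (fun p => α p t)

/-- Rank at most (exactly indexed by) `r`, with scalar coefficients. -/
def RkDec {N : ℕ} {X : Type} (T : (Fin N → X) → ℂ) (r : ℕ) : Prop :=
  ∃ (ι : Type) (_ : Fintype ι), Fintype.card ι = r ∧
    ∃ (c : ι → ℂ) (u : ι → Fin N → X → ℂ), ∀ α, T α = ∑ i, c i * ∏ p, u i p (α p)

theorem RkDec.mul {N : ℕ} {X : Type} {T S : (Fin N → X) → ℂ} {r s : ℕ}
    (hT : RkDec T r) (hS : RkDec S s) : RkDec (fun α => T α * S α) (r * s) := by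
  obtain ⟨ι, _, hι, c, u, h⟩ := hT
  obtain ⟨κ, _, hκ, e, v, h'⟩ := hS
  refine ⟨ι × κ, inferInstance, by simp [hι, hκ], fun x => c x.1 * e x.2,
    fun x p y => u x.1 p y * v x.2 p y, fun α => ?_⟩
  beta_reduce
  rw [h, h', Finset.sum_mul_sum, Fintype.sum_prod_type]
  refine Finset.sum_congr rfl fun i _ => Finset.sum_congr rfl fun k _ => ?_
  rw [Finset.prod_mul_distrib]
  ring

theorem RkDec.prod {N : ℕ} {X K : Type} [DecidableEq K] (S : Finset K)
    (T : K → (Fin N → X) → ℂ) (r : K → ℕ) (h : ∀ k ∈ S, RkDec (T k) (r k)) :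
    RkDec (fun α => ∏ k ∈ S, T k α) (∏ k ∈ S, r k) := by
  induction S using Finset.induction_on with
  | empty => exact ⟨Unit, inferInstance, by simp, fun _ => 1, fun _ _ _ => 1, by simp⟩
  | insert a S ha ih =>
    simp only [Finset.prod_insert ha]
    exact (h a (by simp)).mul (ih fun k hk => h k (by simp [hk]))

theorem RkDec.finish {N : ℕ} {X : Type} {T : (Fin N → X) → ℂ} {r : ℕ} (hN : 1 ≤ N)
    (hT : RkDec T r) : ∃ u : Fin r → Fin N → X → ℂ, ∀ α, T α = ∑ t, ∏ p, u t p (α p) := by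
  obtain ⟨ι, _, hι, c, u, h⟩ := hT
  let e : Fin r ≃ ι := (Fintype.equivFinOfCardEq hι).symm
  refine ⟨fun t p x => (if p = (⟨0, hN⟩ : Fin N) then c (e t) else 1) * u (e t) p x,
    fun α => ?_⟩
  rw [h, ← e.sum_comp]
  refine Finset.sum_congr rfl fun t _ => ?_
  rw [Finset.prod_mul_distrib, Finset.prod_ite_eq']
  simp

theorem roots_filter (q : ℕ) (hq : q ≠ 0) (c : ℕ) :
    ∃ w : ℂ, w = Complex.exp (2 * Real.pi * Complex.I / q) ∧
    ∑ z : Fin q, (w ^ (z : ℕ)) ^ (c + 1) = if q ∣ c + 1 then (q : ℂ) else 0 := by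
  refine ⟨_, rfl, ?_⟩
  have hw := Complex.isPrimitiveRoot_exp q hq
  set w := Complex.exp (2 * Real.pi * Complex.I / q)
  have : ∀ z : Fin q, (w ^ (z : ℕ)) ^ (c + 1) = (w ^ (c + 1)) ^ (z : ℕ) := fun z => by
    rw [← pow_mul, ← pow_mul, mul_comm]
  simp only [this]
  rw [Fin.sum_univ_eq_sum_range (fun z => (w ^ (c + 1)) ^ z) q]
  split_ifs with h
  · rw [(hw.pow_eq_one_iff_dvd _).2 h]; simp
  · have h1 : w ^ (c + 1) ≠ 1 := fun h1 => h ((hw.pow_eq_one_iff_dvd _).1 h1)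
    have h2 := mul_geom_sum (w ^ (c + 1)) q
    rw [← pow_mul, mul_comm (c + 1), pow_mul, hw.pow_eq_one] at h2
    simp only [one_pow, sub_self, mul_eq_zero] at h2
    exact h2.resolve_left (sub_ne_zero.2 h1)

theorem col_dec (d N n J : ℕ) (hN : 1 ≤ N) (k : Fin d) :
    RkDec (N := N) (X := Fin n → Fin d)
      (fun α => ∏ t, if (Finset.univ.filter fun p => α p t = k).card = J then (1 : ℂ) else 0)
      ((n * J + N - 1).choose (N - 1) * (J + 1) ^ n) := by
  classical
  let M := {P : Fin N → ℕ // ∑ i, P i = n * J}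
  let _ : Fintype M := Fintype.ofEquiv _ (Sym.equivNatSumOfFintype (Fin N) (n * J))
  have hM : Fintype.card M = (n * J + N - 1).choose (N - 1) := by
    rw [Fintype.card_congr (Sym.equivNatSumOfFintype (Fin N) (n * J)).symm,
      Sym.card_sym_eq_choose, Fintype.card_fin, ← Nat.choose_symm (by omega)]
    congr 1 <;> omega
  let w : ℂ := Complex.exp (2 * Real.pi * Complex.I / ((J + 1 : ℕ) : ℂ))
  have hw : ∀ c : ℕ, ∑ z : Fin (J + 1), (w ^ (z : ℕ)) ^ (c + 1)
      = if J + 1 ∣ c + 1 then ((J + 1 : ℕ) : ℂ) else 0 := fun c => by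
    obtain ⟨w', hw', h⟩ := roots_filter (J + 1) (by omega) c
    rw [hw'] at h; exact h
  have hJ : ((J + 1 : ℕ) : ℂ) ≠ 0 := by exact_mod_cast Nat.succ_ne_zero J
  refine ⟨M × (Fin n → Fin (J + 1)), inferInstance, by simp [hM],
    fun x => ∏ t, (((J + 1 : ℕ) : ℂ)⁻¹ * w ^ (x.2 t : ℕ)),
    fun x p y => (if (Finset.univ.filter fun t => y t = k).card = x.1.1 p then 1 else 0) *
      ∏ t, (if y t = k then w ^ (x.2 t : ℕ) else 1), fun α => ?_⟩
  set C : Fin n → ℕ := fun t => (Finset.univ.filter fun p => α p t = k).card with hC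
  set R : Fin N → ℕ := fun p => (Finset.univ.filter fun t => α p t = k).card with hR
  have hCR : ∑ t, C t = ∑ p, R p := by
    simp only [hC, hR, Finset.card_filter]
    exact Finset.sum_comm
  have step : ∀ x : M × (Fin n → Fin (J + 1)),
      (∏ t, (((J + 1 : ℕ) : ℂ)⁻¹ * w ^ (x.2 t : ℕ))) *
      ∏ p, ((if (Finset.univ.filter fun t => α p t = k).card = x.1.1 p then (1 : ℂ) else 0) *
      ∏ t, (if α p t = k then w ^ (x.2 t : ℕ) else 1)) =
      (if R = x.1.1 then 1 else 0) *
        ∏ t, (((J + 1 : ℕ) : ℂ)⁻¹ * (w ^ (x.2 t : ℕ)) ^ (C t + 1)) := by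
    intro x
    rw [Finset.prod_mul_distrib (s := (Finset.univ : Finset (Fin N))),
      Finset.prod_comm (s := (Finset.univ : Finset (Fin N)))]
    have h1 : ∏ p, (if (Finset.univ.filter fun t => α p t = k).card = x.1.1 p
        then (1 : ℂ) else 0) = if R = x.1.1 then 1 else 0 := by
      rw [Finset.prod_ite_zero]
      simp [funext_iff, hR]
    have h2 : ∀ t, ∏ p, (if α p t = k then w ^ (x.2 t : ℕ) else 1)
        = (w ^ (x.2 t : ℕ)) ^ C t := by
      intro t
      rw [Finset.prod_ite]; simp [hC]
    rw [h1, Finset.prod_congr rfl fun t _ => h2 t, mul_left_comm, ← Finset.prod_mul_distrib]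
    congr 1
    refine Finset.prod_congr rfl fun t _ => ?_
    ring
  simp only [step]
  rw [Fintype.sum_prod_type]
  rw [← Fintype.sum_mul_sum (fun m : M => if R = m.1 then (1 : ℂ) else 0)
    (fun z : Fin n → Fin (J + 1) =>
      ∏ t, (((J + 1 : ℕ) : ℂ)⁻¹ * (w ^ (z t : ℕ)) ^ (C t + 1)))]
  have h3 : ∑ z : Fin n → Fin (J + 1),
      ∏ t, (((J + 1 : ℕ) : ℂ)⁻¹ * (w ^ (z t : ℕ)) ^ (C t + 1))
      = ∏ t, if J + 1 ∣ C t + 1 then (1 : ℂ) else 0 := by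
    rw [← Fintype.prod_sum (fun t (z : Fin (J + 1)) =>
      (((J + 1 : ℕ) : ℂ)⁻¹ * (w ^ (z : ℕ)) ^ (C t + 1)))]
    refine Finset.prod_congr rfl fun t _ => ?_
    rw [← Finset.mul_sum, hw]
    split_ifs
    · exact inv_mul_cancel₀ hJ
    · simp
  have h4 : ∑ m : M, (if R = m.1 then (1 : ℂ) else 0)
      = if ∑ p, R p = n * J then 1 else 0 := by
    split_ifs with h
    · rw [Finset.sum_eq_single (⟨R, h⟩ : M)]
      · simp
      · intro b _ hb
        rw [if_neg]
        intro hh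
        exact hb (Subtype.ext hh.symm)
      · simp
    · refine Finset.sum_eq_zero fun m _ => if_neg ?_
      intro hh
      exact h (hh ▸ m.2)
  rw [h3, h4, ← hCR, Finset.prod_ite_zero, Finset.prod_ite_zero]
  simp only [Finset.mem_univ, true_imp_iff, Finset.prod_const_one]
  by_cases hall : ∀ t, C t = J
  · have : ∑ t, C t = n * J := by simp [hall]
    rw [if_pos hall, if_pos this, if_pos (fun t => by rw [hall t])]
    simp
  · rw [if_neg hall]
    by_cases hs : ∑ t, C t = n * J
    · rw [if_neg (c := ∀ t, J + 1 ∣ C t + 1), mul_zero]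
      intro hdv
      apply hall
      have hle : ∀ t ∈ Finset.univ, J ≤ C t := fun t _ => by
        have := Nat.le_of_dvd (by omega) (hdv t); omega
      have := (Finset.sum_eq_sum_iff_of_le hle).1 (by simp [hs])
      intro t
      exact (this t (Finset.mem_univ t)).symm
    · rw [if_neg hs, zero_mul]

/-- for d ≥ 2, j_1 ≥ ⋯ ≥ j_d ≥ 1, N = Σ j_i and n ≥ 1, the tensor rank of
D(j_1,…,j_d)^{⊗n} is at most ∏_{k=2}^d C(n·j_k + N − 1, N − 1) · (j_k + 1)^n. -/
theorem DickePow_rank_le (d : ℕ) (hd : 2 ≤ d) (j : Fin d → ℕ) (hmono : Antitone j)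
    (hpos : ∀ i, 1 ≤ j i) (N : ℕ) (hN : N = ∑ i, j i) (n : ℕ) (hn : 1 ≤ n) :
    ∃ u : Fin (∏ k ∈ Finset.univ.erase (⟨0, by omega⟩ : Fin d),
          (n * j k + N - 1).choose (N - 1) * (j k + 1) ^ n) →
        Fin N → (Fin n → Fin d) → ℂ,
      ∀ α : Fin N → Fin n → Fin d,
        DickePow d j N n α = ∑ t, ∏ p, u t p (α p) := by
  have hN1 : 1 ≤ N := by
    rw [hN]
    exact (hpos ⟨0, by omega⟩).trans
      (Finset.single_le_sum (f := j) (fun _ _ => Nat.zero_le _) (Finset.mem_univ _))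
  refine RkDec.finish hN1 ?_
  have key := RkDec.prod (Finset.univ.erase (⟨0, by omega⟩ : Fin d)) _ _
    (fun k _ => col_dec d N n (j k) hN1 k)
  convert key using 1
  funext α
  rw [Finset.prod_comm]
  refine Finset.prod_congr rfl fun t _ => ?_
  rw [Dicke, Finset.prod_ite_zero]
  simp only [Finset.prod_const_one]
  refine if_congr ?_ rfl rfl
  constructor
  · intro h i _; exact h i
  · intro h i
    by_cases hi : i = ⟨0, by omega⟩
    · have hs : ∑ i, (Finset.univ.filter fun p => α p t = i).card = ∑ i, j i := by
        rw [← hN, ← Finset.card_eq_sum_card_fiberwise (fun _ _ => Finset.mem_univ _)]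
        simp
      rw [← Finset.add_sum_erase _ _ (Finset.mem_univ i),
        ← Finset.add_sum_erase _ j (Finset.mem_univ i)] at hs
      subst hi
      rw [Finset.sum_congr rfl h] at hs
      exact Nat.add_right_cancel hs
    · exact h i (by simp [hi])
end

section
/- Let d ≥ 2 and j_1 ≥ ⋯ ≥ j_d ≥ 1 with N = j_1 + ⋯ + j_d. Then limsup_{n→∞} (log₂ rk(D(j_1,…,j_d)^{⊗n})) / n ≤ Σ_{k=2}^d log₂(j_k + 1), where rk denotes tensor rank. (Equivalently, the SLOCC entanglement transformation rate R(GHZ_N, D(j_1,…,j_d)) is at least (Σ_{k=2}^d log₂(j_k+1))^{−1}, since a state is reachable from GHZ_N^{⊗m} by SLOCC if and only if its tensor rank is at most 2^m.) -/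
/-- The tensor rank of D(j_1,…,j_d)^{⊗n}: the least r admitting a rank-r decomposition. -/
noncomputable def rkDickePow (d : ℕ) (j : Fin d → ℕ) (N n : ℕ) : ℕ :=
  sInf {r : ℕ | ∃ u : Fin r → Fin N → (Fin n → Fin d) → ℂ,
    ∀ α : Fin N → Fin n → Fin d, DickePow d j N n α = ∑ t, ∏ p, u t p (α p)}

theorem rank_of_group (N D : ℕ) (X G : Type) [AddCommGroup G] [Fintype G] [DecidableEq G]
    (hN : 0 < N) (hD : Fintype.card G = D) (g : X → G) (g0 : G) :
    ∃ u : Fin D → Fin N → X → ℂ, ∀ α : Fin N → X,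
      (if ∑ p, g (α p) = g0 then (1 : ℂ) else 0) = ∑ t, ∏ p, u t p (α p) := by
  classical
  have hc : Fintype.card (AddChar G ℂ) = D := by
    rw [← hD, ← Nat.card_eq_fintype_card, ← Nat.card_eq_fintype_card]
    simp
  let e : Fin D ≃ AddChar G ℂ := (Fintype.equivFinOfCardEq hc).symm
  refine ⟨fun t p x => (if p = ⟨0, hN⟩ then (D : ℂ)⁻¹ * e t (-g0) else 1) * e t (g x), ?_⟩
  intro α
  have hD0 : (D : ℂ) ≠ 0 := by
    rw [← hD]; exact_mod_cast Fintype.card_ne_zero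
  have h1 : ∀ t, ∏ p, ((if p = (⟨0, hN⟩ : Fin N) then (D : ℂ)⁻¹ * e t (-g0) else 1) * e t (g (α p)))
      = (D : ℂ)⁻¹ * e t (∑ p, g (α p) - g0) := by
    intro t
    have hs : e t (∑ p, g (α p)) = ∏ p, e t (g (α p)) := by
      have := map_prod (e t).toMonoidHom (fun p => Multiplicative.ofAdd (g (α p))) Finset.univ
      exact this
    rw [Finset.prod_mul_distrib, Finset.prod_ite_eq' Finset.univ, if_pos (Finset.mem_univ _),
      ← hs, mul_assoc, ← AddChar.map_add_eq_mul]
    congr 2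
    abel
  simp only [h1]
  rw [← Finset.mul_sum, Equiv.sum_comp e (fun χ => χ (∑ p, g (α p) - g0)),
    AddChar.sum_apply_eq_ite, hD]
  simp only [sub_eq_zero]
  split_ifs
  · field_simp
  · simp

theorem count_lemma (d n N : ℕ) (z : Fin d) (j : Fin d → ℕ) (hN : N = ∑ i, j i)
    (c : Fin n → Fin d → ℕ) (hc : ∀ t, ∑ i, c t i = N)
    (h1 : ∀ t k, k ≠ z → c t k ≡ j k [MOD (j k + 1)])
    (h2 : ∑ t, c t z ≡ n * j z [MOD (n * N + 1)]) : ∀ t k, c t k = j k := by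
  have hge : ∀ t k, k ≠ z → j k ≤ c t k := by
    intro t k hk
    have h := h1 t k hk
    unfold Nat.ModEq at h
    rw [Nat.mod_eq_of_lt (Nat.lt_succ_self (j k))] at h
    calc j k = c t k % (j k + 1) := h.symm
      _ ≤ c t k := Nat.mod_le _ _
  have hsplit : ∀ f : Fin d → ℕ, ∑ i, f i = f z + ∑ i ∈ Finset.univ.erase z, f i :=
    fun f => (Finset.add_sum_erase _ f (Finset.mem_univ z)).symm
  have hz : ∀ t, c t z ≤ j z := by
    intro t
    have := hc t
    rw [hN, hsplit, hsplit j] at this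
    have h3 : ∑ i ∈ Finset.univ.erase z, j i ≤ ∑ i ∈ Finset.univ.erase z, c t i :=
      Finset.sum_le_sum fun i hi => hge t i (Finset.ne_of_mem_erase hi)
    omega
  have hjz : j z ≤ N := by rw [hN, hsplit]; omega
  have hle : ∑ t, c t z ≤ n * j z := by
    calc ∑ t, c t z ≤ ∑ _t : Fin n, j z := Finset.sum_le_sum fun t _ => hz t
      _ = n * j z := by simp
  have hle2 : n * j z ≤ n * N := Nat.mul_le_mul_left _ hjz
  have heq : ∑ t, c t z = ∑ _t : Fin n, j z := by
    have := Nat.ModEq.eq_of_lt_of_lt h2 (by omega) (by omega)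
    simpa using this
  have hz' : ∀ t, c t z = j z := fun t =>
    (Finset.sum_eq_sum_iff_of_le (fun t _ => hz t)).1 heq t (Finset.mem_univ t)
  intro t k
  by_cases hk : k = z
  · rw [hk]; exact hz' t
  · have := hc t
    rw [hN, hsplit, hsplit j, hz' t] at this
    have h3 := (Finset.sum_eq_sum_iff_of_le (s := Finset.univ.erase z)
      (fun i hi => hge t i (Finset.ne_of_mem_erase hi))).1 (by omega)
    exact (h3 k (Finset.mem_erase.2 ⟨hk, Finset.mem_univ k⟩)).symm

theorem rk_le (d n N : ℕ) (z : Fin d) (j : Fin d → ℕ) (hN : N = ∑ i, j i) (hN0 : 0 < N) :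
    rkDickePow d j N n ≤ (∏ k ∈ Finset.univ.erase z, (j k + 1)) ^ n * (n * N + 1) := by
  classical
  let m : Fin d → ℕ := fun k => if k = z then 1 else j k + 1
  have : ∀ k, NeZero (m k) := fun k => ⟨by simp only [m]; split_ifs <;> omega⟩
  have hcard : Fintype.card ((Fin n → ∀ k : Fin d, ZMod (m k)) × ZMod (n * N + 1)) =
      (∏ k ∈ Finset.univ.erase z, (j k + 1)) ^ n * (n * N + 1) := by
    simp only [Fintype.card_prod, Fintype.card_pi, ZMod.card, Finset.prod_const,
      Finset.card_univ, Fintype.card_fin]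
    congr 2
    rw [← Finset.mul_prod_erase _ m (Finset.mem_univ z)]
    simp only [m, if_true, one_mul]
    exact Finset.prod_congr rfl fun k hk => if_neg (Finset.ne_of_mem_erase hk)
  let g : (Fin n → Fin d) → ((Fin n → ∀ k : Fin d, ZMod (m k)) × ZMod (n * N + 1)) := fun x =>
    (fun t k => if x t = k then 1 else 0, ∑ t, if x t = z then 1 else 0)
  let g0 : ((Fin n → ∀ k : Fin d, ZMod (m k)) × ZMod (n * N + 1)) := (fun _ k => (j k : ZMod (m k)), ((n * j z : ℕ) : ZMod (n * N + 1)))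
  obtain ⟨u, hu⟩ := rank_of_group N _ (Fin n → Fin d) _ hN0 hcard g g0
  refine Nat.sInf_le ⟨u, fun α => ?_⟩
  rw [← hu α]
  let c : Fin n → Fin d → ℕ := fun t k => (Finset.univ.filter fun p => α p t = k).card
  have hcs : ∀ t, ∑ i, c t i = N := by
    intro t
    have := Finset.card_eq_sum_card_fiberwise (s := (Finset.univ : Finset (Fin N)))
      (t := Finset.univ) (f := fun p => α p t) (by simp [Set.MapsTo])
    simpa using this.symm
  have hg1 : ∀ t k, (∑ p, g (α p)).1 t k = (c t k : ZMod (m k)) := by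
    intro t k
    simp [g, c, Prod.fst_sum, Finset.sum_apply]
  have hg2 : (∑ p, g (α p)).2 = ((∑ t, c t z : ℕ) : ZMod (n * N + 1)) := by
    simp only [g, Prod.snd_sum]
    rw [Finset.sum_comm]
    simp [c]
  have hiff : (∑ p, g (α p) = g0) ↔ ∀ t k, c t k = j k := by
    constructor
    · intro h
      apply count_lemma d n N z j hN c hcs
      · intro t k hk
        have h3 := hg1 t k
        rw [h] at h3
        have h4 := ((ZMod.natCast_eq_natCast_iff _ _ _).1 h3).symm
        simpa only [m, if_neg hk] using h4
      · rw [h] at hg2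
        exact ((ZMod.natCast_eq_natCast_iff _ _ _).1 hg2).symm
    · intro h
      refine Prod.ext ?_ ?_
      · funext t k
        rw [hg1, h]
      · rw [hg2]
        simp [h, g0]
  simp only [hiff, DickePow, Dicke]
  by_cases h : ∀ t k, c t k = j k
  · rw [if_pos h]
    exact Finset.prod_eq_one fun t _ => if_pos (h t)
  · rw [if_neg h]
    push Not at h
    obtain ⟨t, k, hk⟩ := h
    exact Finset.prod_eq_zero (Finset.mem_univ t) (if_neg fun h' => hk (h' k))

theorem tendsto_aux (A : ℝ) (N : ℕ) :
    Filter.Tendsto (fun n : ℕ => A + (Real.log (n : ℝ) / n + Real.log (N + 1) / n) / Real.log 2)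
      Filter.atTop (nhds A) := by
  have h1 : Filter.Tendsto (fun n : ℕ => Real.log (n : ℝ) / n) Filter.atTop (nhds 0) :=
    (Real.isLittleO_log_id_atTop.tendsto_div_nhds_zero).comp tendsto_natCast_atTop_atTop
  have h2 : Filter.Tendsto (fun n : ℕ => Real.log (N + 1) / (n : ℝ)) Filter.atTop (nhds 0) :=
    tendsto_const_nhds.div_atTop tendsto_natCast_atTop_atTop
  simpa using ((h1.add h2).div_const (Real.log 2)).const_add A

/-- limsup_{n→∞} (log₂ rk(D(j_1,…,j_d)^{⊗n})) / n ≤ Σ_{k=2}^d log₂(j_k + 1).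
(Equivalently, R(GHZ_N, D(j_1,…,j_d)) ≥ (Σ_{k=2}^d log₂(j_k+1))^{−1}.) -/
theorem limsup_log_rank_DickePow_le (d : ℕ) (hd : 2 ≤ d) (j : Fin d → ℕ)
    (hmono : Antitone j) (hpos : ∀ i, 1 ≤ j i) (N : ℕ) (hN : N = ∑ i, j i) :
    Filter.limsup (fun n : ℕ => Real.logb 2 (rkDickePow d j N n) / n) Filter.atTop
      ≤ ∑ k ∈ Finset.univ.erase (⟨0, by omega⟩ : Fin d), Real.logb 2 (j k + 1) := by
  have hN0 : 0 < N := by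
    have h := Finset.single_le_sum (f := j) (fun i _ => Nat.zero_le _)
      (Finset.mem_univ (⟨0, by omega⟩ : Fin d))
    have := hpos ⟨0, by omega⟩
    omega
  set z : Fin d := ⟨0, by omega⟩ with hz
  have hA : ∑ k ∈ Finset.univ.erase z, Real.logb 2 (j k + 1)
      = Real.logb 2 ((∏ k ∈ Finset.univ.erase z, (j k + 1) : ℕ) : ℝ) := by
    push_cast
    rw [Real.logb_prod]
    intro k _
    positivity
  rw [hA]
  set R : ℕ := ∏ k ∈ Finset.univ.erase z, (j k + 1) with hR
  have hR0 : 0 < R := Finset.prod_pos fun k _ => Nat.succ_pos _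
  have ht := tendsto_aux (Real.logb 2 (R : ℝ)) N
  rw [← ht.limsup_eq]
  refine Filter.limsup_le_limsup ?_ ?_ ht.isBoundedUnder_le
  · filter_upwards [Filter.eventually_ge_atTop 1] with n hn
    have hn0 : (0 : ℝ) < n := by exact_mod_cast hn
    have hb : rkDickePow d j N n ≤ R ^ n * (n * (N + 1)) :=
      (rk_le d n N z j hN hN0).trans (Nat.mul_le_mul_left _ (by nlinarith))
    have hlog : Real.log (rkDickePow d j N n) ≤ n * Real.log R + (Real.log n + Real.log (N + 1)) := by
      have hR1 : (0 : ℝ) < R := by exact_mod_cast hR0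
      rw [← Real.log_pow, ← Real.log_mul hn0.ne' (by positivity),
        ← Real.log_mul (by positivity) (by positivity)]
      rcases Nat.eq_zero_or_pos (rkDickePow d j N n) with h0 | h0
      · rw [h0, Nat.cast_zero, Real.log_zero]
        have h5 : (1 : ℕ) ≤ R ^ n * (n * (N + 1)) := Nat.succ_le_of_lt (by positivity)
        exact Real.log_nonneg (by exact_mod_cast h5)
      · exact Real.log_le_log (by exact_mod_cast h0) (by exact_mod_cast hb)
    have hl2 : 0 < Real.log 2 := Real.log_pos (by norm_num)
    unfold Real.logb
    have he : Real.log R / Real.log 2 + (Real.log n / n + Real.log (N + 1) / n) / Real.log 2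
        = (n * Real.log R + (Real.log n + Real.log (N + 1))) / Real.log 2 / n := by
      field_simp
    rw [he]
    gcongr
  · refine Filter.IsCoboundedUnder.of_frequently_ge (a := 0) (Filter.Eventually.frequently ?_)
    refine Filter.Eventually.of_forall fun n => ?_
    exact div_nonneg (div_nonneg (Real.log_natCast_nonneg _) (Real.log_nonneg (by norm_num)))
      (Nat.cast_nonneg _)
end

section
/- Let d ≥ 2 and j_1 ≥ ⋯ ≥ j_d ≥ 1 with N = j_1 + ⋯ + j_d, and let v_1,…,v_N ∈ ℕ^{d−1} satisfy Σ_{p=1}^N v_p = (n·j_2,…,n·j_d). Then the tensor [v_1,…,v_N]_n has tensor rank at most ∏_{k=2}^d (j_k + 1)^n. -/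
/-- The characteristic vector: `charVec α k` counts the positions t with α(t) = k.
Restricted to indices k with k.val ≠ 0 this is the vector (l_2,…,l_d) ∈ ℕ^{d−1}. -/
def charVec {d n : ℕ} (α : Fin n → Fin d) (k : Fin d) : ℕ :=
  (Finset.univ.filter fun t => α t = k).card

/-- The tensor [v_1,…,v_N]_n: agrees with D(j_1,…,j_d)^{⊗n} on entries (α_1,…,α_N)
with C(α_p) = v_p for all p, and is 0 elsewhere. -/
noncomputable def bracketDicke (d : ℕ) (j : Fin d → ℕ) (N n : ℕ)
    (v : Fin N → {k : Fin d // k.val ≠ 0} → ℕ) (α : Fin N → Fin n → Fin d) : ℂ :=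
  if ∀ p, ∀ k : {k : Fin d // k.val ≠ 0}, charVec (α p) k.val = v p k
  then DickePow d j N n α else 0

theorem dicke_root_avg (J m : ℕ) (z : ℂ) (hz : IsPrimitiveRoot z (J + 1)) :
    ∑ c : Fin (J + 1), (z ^ (c : ℕ) / ((J : ℂ) + 1)) * (z ^ (c : ℕ)) ^ m
      = if (J + 1) ∣ (m + 1) then 1 else 0 := by
  have hJ : ((J : ℂ) + 1) ≠ 0 := by exact_mod_cast Nat.succ_ne_zero J
  have h1 : ∀ c : Fin (J + 1), (z ^ (c : ℕ) / ((J : ℂ) + 1)) * (z ^ (c : ℕ)) ^ m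
      = (z ^ (m + 1)) ^ (c : ℕ) / ((J : ℂ) + 1) := by
    intro c
    rw [div_mul_eq_mul_div]
    congr 1
    rw [← pow_mul, ← pow_mul, ← pow_add]
    congr 1
    ring
  rw [Finset.sum_congr rfl (fun c _ => h1 c), ← Finset.sum_div,
    Fin.sum_univ_eq_sum_range (fun i => (z ^ (m + 1)) ^ i) (J + 1)]
  split_ifs with h
  · rw [(hz.pow_eq_one_iff_dvd _).2 h]
    simp [hJ]
  · have hne : z ^ (m + 1) ≠ 1 := fun h' => h ((hz.pow_eq_one_iff_dvd _).1 h')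
    rw [geom_sum_eq hne, ← pow_mul, mul_comm, pow_mul, hz.pow_eq_one]
    simp

theorem dicke_reindex {N : ℕ} (hN : 0 < N) {A I : Type*} [Fintype I] (M : ℕ)
    (hM : Fintype.card I = M) (T : (Fin N → A) → ℂ) (w : I → ℂ) (u : I → Fin N → A → ℂ)
    (h : ∀ α, T α = ∑ c, w c * ∏ p, u c p (α p)) :
    ∃ u : Fin M → Fin N → A → ℂ, ∀ α, T α = ∑ t, ∏ p, u t p (α p) := by
  classical
  let e : I ≃ Fin M := Fintype.equivFinOfCardEq hM
  refine ⟨fun t p a => (if p = ⟨0, hN⟩ then w (e.symm t) else 1) * u (e.symm t) p a, ?_⟩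
  intro α
  rw [h α, ← e.symm.sum_comp]
  refine Finset.sum_congr rfl fun t _ => ?_
  rw [Finset.prod_mul_distrib]
  simp

theorem bracketDicke_rank_le (d : ℕ) (hd : 2 ≤ d) (j : Fin d → ℕ) (hmono : Antitone j)
    (hpos : ∀ i, 1 ≤ j i) (N : ℕ) (hN : N = ∑ i, j i) (n : ℕ)
    (v : Fin N → {k : Fin d // k.val ≠ 0} → ℕ)
    (hv : ∀ k : {k : Fin d // k.val ≠ 0}, ∑ p, v p k = n * j k.val) :
    ∃ u : Fin (∏ k : {k : Fin d // k.val ≠ 0}, (j k.val + 1) ^ n) →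
        Fin N → (Fin n → Fin d) → ℂ,
      ∀ α : Fin N → Fin n → Fin d,
        bracketDicke d j N n v α = ∑ t, ∏ p, u t p (α p) := by
  classical
  have hN0 : 0 < N := by
    rw [hN]
    have := Finset.single_le_sum (f := j) (fun i _ => Nat.zero_le _)
      (Finset.mem_univ (⟨0, by omega⟩ : Fin d))
    have := hpos ⟨0, by omega⟩
    omega
  have hz : ∀ k : {k : Fin d // k.val ≠ 0}, ∃ z : ℂ, IsPrimitiveRoot z (j k.val + 1) :=
    fun k => ⟨_, Complex.isPrimitiveRoot_exp _ (Nat.succ_ne_zero _)⟩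
  choose z hz using hz
  refine dicke_reindex hN0 (I := (k : {k : Fin d // k.val ≠ 0}) → Fin n → Fin (j k.val + 1))
    _ (by simp) _
    (fun c => ∏ k, ∏ t, z k ^ (c k t : ℕ) / ((j k.val : ℂ) + 1))
    (fun c p a => if ∀ k : {k : Fin d // k.val ≠ 0}, charVec a k.val = v p k then
      ∏ k, ∏ t, (if a t = k.val then z k ^ (c k t : ℕ) else 1) else 0) ?_
  intro α
  unfold bracketDicke
  split_ifs with hα
  swap
  · push Not at hα
    obtain ⟨p, k, hk⟩ := hα
    symm
    refine Finset.sum_eq_zero fun c _ => ?_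
    rw [Finset.prod_eq_zero (Finset.mem_univ p), mul_zero]
    rw [if_neg]
    intro h
    exact hk (h k)
  let m : {k : Fin d // k.val ≠ 0} → Fin n → ℕ :=
    fun k t => (Finset.univ.filter fun p => α p t = k.val).card
  have hsum : ∀ k, ∑ t, m k t = n * j k.val := by
    intro k
    rw [← hv k]
    simp only [m, Finset.card_filter]
    rw [Finset.sum_comm]
    refine Finset.sum_congr rfl fun p _ => ?_
    rw [← hα p k, charVec, Finset.card_filter]
  have key : ∀ c : (k : {k : Fin d // k.val ≠ 0}) → Fin n → Fin (j k.val + 1),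
      ((∏ k, ∏ t, z k ^ (c k t : ℕ) / ((j k.val : ℂ) + 1)) *
        ∏ p, if ∀ k : {k : Fin d // k.val ≠ 0}, charVec (α p) k.val = v p k then
      ∏ k, ∏ t, (if α p t = k.val then z k ^ (c k t : ℕ) else 1) else 0)
      = ∏ k, ∏ t, (z k ^ (c k t : ℕ) / ((j k.val : ℂ) + 1)) * (z k ^ (c k t : ℕ)) ^ m k t := by
    intro c
    have : ∀ p, (if ∀ k : {k : Fin d // k.val ≠ 0}, charVec (α p) k.val = v p k then
      ∏ k, ∏ t, (if α p t = k.val then z k ^ (c k t : ℕ) else 1) else 0)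
      = ∏ k : {k : Fin d // k.val ≠ 0}, ∏ t, (if α p t = k.val then z k ^ (c k t : ℕ) else 1) :=
      fun p => if_pos (hα p)
    rw [Finset.prod_congr rfl (fun p _ => this p), Finset.prod_comm (s := (Finset.univ : Finset (Fin N))), ← Finset.prod_mul_distrib]
    refine Finset.prod_congr rfl fun k _ => ?_
    rw [Finset.prod_comm, ← Finset.prod_mul_distrib]
    refine Finset.prod_congr rfl fun t _ => ?_
    rw [← Finset.prod_filter, Finset.prod_const]
  rw [Finset.sum_congr rfl (fun c _ => key c)]
  have swap : (∑ c : (k : {k : Fin d // k.val ≠ 0}) → Fin n → Fin (j k.val + 1),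
      ∏ k, ∏ t, (z k ^ (c k t : ℕ) / ((j k.val : ℂ) + 1)) * (z k ^ (c k t : ℕ)) ^ m k t)
      = ∏ k, ∏ t, if (j k.val + 1) ∣ (m k t + 1) then (1 : ℂ) else 0 := by
    rw [← Fintype.prod_sum (fun (k : {k : Fin d // k.val ≠ 0}) (c : Fin n → Fin (j k.val + 1)) =>
      ∏ t, (z k ^ (c t : ℕ) / ((j k.val : ℂ) + 1)) * (z k ^ (c t : ℕ)) ^ m k t)]
    refine Finset.prod_congr rfl fun k _ => ?_
    rw [← Fintype.prod_sum (fun (t : Fin n) (c : Fin (j k.val + 1)) =>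
      (z k ^ (c : ℕ) / ((j k.val : ℂ) + 1)) * (z k ^ (c : ℕ)) ^ m k t)]
    exact Finset.prod_congr rfl fun t _ => dicke_root_avg _ _ _ (hz k)
  rw [swap]
  unfold DickePow Dicke
  rw [Finset.prod_comm]
  by_cases hall : ∀ k t, (j k.val + 1) ∣ (m k t + 1)
  · have hge : ∀ k t, j k.val ≤ m k t := fun k t => by
      have := Nat.le_of_dvd (Nat.succ_pos _) (hall k t)
      omega
    have heq : ∀ k t, m k t = j k.val := by
      intro k t
      have h2 : ∑ t : Fin n, j k.val = ∑ t, m k t := by rw [hsum k]; simp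
      exact ((Finset.sum_eq_sum_iff_of_le (fun t _ => hge k t)).1 h2 t (Finset.mem_univ t)).symm
    refine Finset.prod_congr rfl fun t _ => ?_
    rw [Finset.prod_eq_one (fun k _ => if_pos (hall k t)), if_pos]
    intro i
    have hne : ∀ i : Fin d, i.val ≠ 0 →
        (Finset.univ.filter fun p => α p t = i).card = j i := fun i hi => heq ⟨i, hi⟩ t
    by_cases hi : i.val ≠ 0
    · exact hne i hi
    · have htot : ∑ i, (Finset.univ.filter fun p => α p t = i).card = ∑ i, j i := by
        rw [← hN, ← Finset.card_eq_sum_card_fiberwise (fun x _ => Finset.mem_univ _)]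
        simp
      rw [← Finset.add_sum_erase _ _ (Finset.mem_univ i),
        ← Finset.add_sum_erase _ j (Finset.mem_univ i),
        Finset.sum_congr rfl (fun i' hi' => hne i' ?_)] at htot
      · exact Nat.add_right_cancel htot
      · intro h0
        apply Finset.ne_of_mem_erase hi'
        apply Fin.ext
        omega
  · push Not at hall
    obtain ⟨k, t, hkt⟩ := hall
    rw [Finset.prod_eq_zero (Finset.mem_univ t), Finset.prod_eq_zero (Finset.mem_univ t)]
    · exact Finset.prod_eq_zero (Finset.mem_univ k) (if_neg hkt)
    · rw [if_neg]
      intro h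
      apply hkt
      have : m k t = j k.val := h k.val
      rw [this]
end

section
/- Let d ≥ 2 and j_1 ≥ ⋯ ≥ j_d ≥ 1 with N = j_1 + ⋯ + j_d, and let r = ⌊N/2⌋. Then the tensor rank of the Dicke tensor D(j_1,…,j_d) (as an N-party tensor) is at least the cardinality of the set {(β_1,…,β_d) ∈ ℕ^d : 0 ≤ β_i ≤ j_i for all i, and β_1 + ⋯ + β_d = r}. -/
theorem exists_word (d m : ℕ) (β : Fin d → ℕ) (h : ∑ i, β i = m) :
    ∃ a : Fin m → Fin d, ∀ i, (Finset.univ.filter fun p => a p = i).card = β i := by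
  have e : Fin m ≃ (Σ i, Fin (β i)) := Fintype.equivOfCardEq (by simp [h])
  refine ⟨fun p => (e p).1, fun i => ?_⟩
  have h1 : (Finset.univ.filter fun p => (e p).1 = i).card
      = Fintype.card {p // (e p).1 = i} := (Fintype.card_subtype _).symm
  rw [h1]
  have e2 : {p // (e p).1 = i} ≃ {x : (Σ i, Fin (β i)) // x.1 = i} :=
    e.subtypeEquiv (fun _ => Iff.rfl)
  rw [Fintype.card_congr (e2.trans (Equiv.sigmaSubtype i))]
  simp

theorem Dicke_aux (d : ℕ) (j : Fin d → ℕ) (m n : ℕ) (hN : m + n = ∑ i, j i)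
    (r : ℕ) (u : Fin r → Fin (m + n) → Fin d → ℂ)
    (hu : ∀ s : Fin (m + n) → Fin d, Dicke d j (m + n) s = ∑ t, ∏ p, u t p (s p)) :
    ((Fintype.piFinset fun i : Fin d => Finset.range (j i + 1)).filter
        fun β => ∑ i, β i = m).card ≤ r := by
  classical
  set B := (Fintype.piFinset fun i : Fin d => Finset.range (j i + 1)).filter
        fun β => ∑ i, β i = m with hB
  have hle : ∀ β : B, ∀ i, β.1 i ≤ j i := by
    intro β i
    have := (Fintype.mem_piFinset.1 (Finset.mem_filter.1 β.2).1) i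
    have := Finset.mem_range.1 this
    omega
  have hs : ∀ β : B, ∑ i, β.1 i = m := fun β => (Finset.mem_filter.1 β.2).2
  have hs' : ∀ β : B, ∑ i, (j i - β.1 i) = n := by
    intro β
    have h1 : ∑ i, (j i - β.1 i) + ∑ i, β.1 i = ∑ i, j i := by
      rw [← Finset.sum_add_distrib]
      exact Finset.sum_congr rfl fun i _ => Nat.sub_add_cancel (hle β i)
    have := hs β
    omega
  choose a ha using fun β : B => exists_word d m β.1 (hs β)
  choose b hb using fun β : B => exists_word d n (fun i => j i - β.1 i) (hs' β)
  let P : Matrix B (Fin r) ℂ := fun β t => ∏ p, u t (Fin.castAdd n p) (a β p)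
  let Q : Matrix (Fin r) B ℂ := fun t β => ∏ p, u t (Fin.natAdd m p) (b β p)
  have hcount : ∀ (x y : B) i, (Finset.univ.filter
      fun p => (Fin.append (a x) (b y)) p = i).card = x.1 i + (j i - y.1 i) := by
    intro x y i
    rw [← ha x i, ← hb y i]
    simp only [Finset.card_filter]
    rw [Fin.sum_univ_add]
    simp
  have hPQ : P * Q = 1 := by
    ext x y
    have h := hu (Fin.append (a x) (b y))
    simp only [Fin.prod_univ_add, Fin.append_left, Fin.append_right] at h
    rw [Matrix.mul_apply, Matrix.one_apply]
    refine h.symm.trans ?_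
    unfold Dicke
    refine if_congr ?_ rfl rfl
    simp only [hcount]
    constructor
    · intro hh
      apply Subtype.ext
      funext i
      have := hh i
      have := hle y i
      omega
    · rintro rfl i
      have := hle x i
      omega
  have h1 : (P * Q).rank = B.card := by
    rw [hPQ, Matrix.rank_one, Fintype.card_coe]
  have h2 := Matrix.rank_mul_le_left P Q
  have h3 := Matrix.rank_le_card_width P
  rw [Fintype.card_fin] at h3
  omega

/-- the tensor rank of D(j_1,…,j_d) is at least the number of tuples
(β_1,…,β_d) ∈ ℕ^d with β_i ≤ j_i for all i and Σ β_i = ⌊N/2⌋: any rank-r decomposition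
of the Dicke tensor satisfies r ≥ that cardinality. -/
theorem Dicke_rank_ge (d : ℕ) (hd : 2 ≤ d) (j : Fin d → ℕ) (hmono : Antitone j)
    (hpos : ∀ i, 1 ≤ j i) (N : ℕ) (hN : N = ∑ i, j i)
    (r : ℕ) (u : Fin r → Fin N → Fin d → ℂ)
    (hu : ∀ s : Fin N → Fin d, Dicke d j N s = ∑ t, ∏ p, u t p (s p)) :
    ((Fintype.piFinset fun i : Fin d => Finset.range (j i + 1)).filter
        fun β => ∑ i, β i = N / 2).card ≤ r := by
  obtain ⟨n, hn⟩ : ∃ n, N = N / 2 + n := ⟨N - N / 2, by omega⟩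
  generalize N / 2 = m at hn ⊢
  subst hn
  exact Dicke_aux d j m n hN r u hu
end

section
/- Let d ≥ 2 and j_1 ≥ ⋯ ≥ j_d ≥ 1 with N = j_1 + ⋯ + j_d, and suppose j_1 ≥ j_2 + ⋯ + j_d. Then for every n ≥ 1, the tensor rank of D(j_1,…,j_d)^{⊗n} is at least ∏_{i=2}^d (j_i + 1)^n. -/
theorem exists_counts (d : ℕ) (z : Fin d) (m : ℕ) (c : Fin d → ℕ)
    (hc : ∑ i ∈ Finset.univ.erase z, c i ≤ m) :
    ∃ f : Fin m → Fin d, ∀ i, i ≠ z → (Finset.univ.filter fun p => f p = i).card = c i := by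
  classical
  let c' : Fin d → ℕ := fun i => if i = z then m - ∑ i ∈ Finset.univ.erase z, c i else c i
  have hs : ∑ i, c' i = m := by
    rw [← Finset.add_sum_erase _ _ (Finset.mem_univ z)]
    have : ∑ i ∈ Finset.univ.erase z, c' i = ∑ i ∈ Finset.univ.erase z, c i :=
      Finset.sum_congr rfl fun i hi => by simp [c', Finset.ne_of_mem_erase hi]
    rw [this]
    simp only [c', if_true]
    omega
  have key : ∃ f : Fin (∑ i, c' i) → Fin d,
      ∀ i, (Finset.univ.filter fun p => f p = i).card = c' i := by
    refine ⟨fun p => (finSigmaFinEquiv.symm p).1, fun i => ?_⟩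
    rw [← Fintype.card_subtype]
    have e1 : {p : Fin (∑ i, c' i) // (finSigmaFinEquiv.symm p).1 = i} ≃
        {p : (i : Fin d) × Fin (c' i) // p.1 = i} :=
      finSigmaFinEquiv.symm.subtypeEquiv (fun p => Iff.rfl)
    rw [Fintype.card_congr (e1.trans (Equiv.sigmaSubtype i)), Fintype.card_fin]
  rw [hs] at key
  obtain ⟨f, hf⟩ := key
  exact ⟨f, fun i hi => by rw [hf i]; simp [c', hi]⟩

theorem card_append (d a b : ℕ) (f : Fin a → Fin d) (g : Fin b → Fin d) (i : Fin d) :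
    (Finset.univ.filter fun p => Fin.append f g p = i).card =
      (Finset.univ.filter fun p => f p = i).card + (Finset.univ.filter fun p => g p = i).card := by
  simp only [Finset.card_filter, Fin.sum_univ_add, Fin.append_left, Fin.append_right]

theorem counts_iff (d N : ℕ) (z : Fin d) (j : Fin d → ℕ) (hN : N = ∑ i, j i) (s : Fin N → Fin d) :
    (∀ i, (Finset.univ.filter fun p => s p = i).card = j i) ↔
    (∀ i, i ≠ z → (Finset.univ.filter fun p => s p = i).card = j i) := by
  refine ⟨fun h i _ => h i, fun h i => ?_⟩
  by_cases hi : i = z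
  · have h1 : N = ∑ i, (Finset.univ.filter fun p => s p = i).card := by
      have := Finset.card_eq_sum_card_fiberwise (f := s) (s := Finset.univ) (t := Finset.univ)
        (by simp)
      simpa using this
    rw [← Finset.add_sum_erase _ _ (Finset.mem_univ z)] at hN h1
    rw [Finset.sum_congr rfl fun i hi => h i (Finset.ne_of_mem_erase hi)] at h1
    subst hi
    exact Nat.add_right_cancel (h1.symm.trans hN)
  · exact h i hi

/-- for d ≥ 2, j_1 ≥ ⋯ ≥ j_d ≥ 1, N = Σ j_i with j_1 ≥ j_2 + ⋯ + j_d,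
and every n ≥ 1, the tensor rank of D(j_1,…,j_d)^{⊗n} is at least ∏_{i=2}^d (j_i + 1)^n:
any rank-r decomposition satisfies r ≥ that product. -/
theorem DickePow_rank_ge (d : ℕ) (hd : 2 ≤ d) (j : Fin d → ℕ) (hmono : Antitone j)
    (hpos : ∀ i, 1 ≤ j i) (N : ℕ) (hN : N = ∑ i, j i)
    (hbig : ∑ i ∈ Finset.univ.erase (⟨0, by omega⟩ : Fin d), j i ≤ j ⟨0, by omega⟩)
    (n : ℕ) (hn : 1 ≤ n)
    (r : ℕ) (u : Fin r → Fin N → (Fin n → Fin d) → ℂ)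
    (hu : ∀ α : Fin N → Fin n → Fin d, DickePow d j N n α = ∑ t, ∏ p, u t p (α p)) :
    ∏ i ∈ Finset.univ.erase (⟨0, by omega⟩ : Fin d), (j i + 1) ^ n ≤ r := by
  classical
  generalize hz : (⟨0, by omega⟩ : Fin d) = z at *
  obtain ⟨a, ha⟩ : ∃ a, a = ∑ i ∈ Finset.univ.erase z, j i := ⟨_, rfl⟩
  obtain ⟨b, hb⟩ : ∃ b, b = j z := ⟨_, rfl⟩
  have hab : N = a + b := by
    rw [hN, ← Finset.add_sum_erase _ _ (Finset.mem_univ z), ha, hb, add_comm]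
  subst hab
  let K := (i : {i : Fin d // i ≠ z}) → Fin (j i + 1)
  let c : K → Fin d → ℕ := fun k i => if h : i ≠ z then (k ⟨i, h⟩ : ℕ) else 0
  have hcj : ∀ k i, c k i ≤ j i := by
    intro k i
    simp only [c]
    split_ifs with h
    · exact Nat.lt_succ_iff.mp (k ⟨i, h⟩).2
    · exact Nat.zero_le _
  have hA : ∀ k : K, ∃ f : Fin a → Fin d, ∀ i, i ≠ z →
      (Finset.univ.filter fun p => f p = i).card = c k i := fun k =>
    exists_counts d z a (c k) (ha ▸ Finset.sum_le_sum fun i _ => hcj k i)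
  have hB : ∀ k : K, ∃ f : Fin b → Fin d, ∀ i, i ≠ z →
      (Finset.univ.filter fun p => f p = i).card = j i - c k i := fun k =>
    exists_counts d z b (fun i => j i - c k i)
      ((Finset.sum_le_sum fun i _ => Nat.sub_le _ _).trans (hb ▸ hbig))
  choose A hA using hA
  choose B hB using hB
  have hD : ∀ k k' : K, Dicke d j (a + b) (Fin.append (A k) (B k')) = if k = k' then 1 else 0 := by
    intro k k'
    unfold Dicke
    congr 1
    rw [counts_iff d _ z j hN, eq_iff_iff]
    constructor
    · intro h
      funext i
      have h1 := h i.1 i.2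
      rw [card_append, hA _ _ i.2, hB _ _ i.2] at h1
      have h2 := hcj k' i.1
      have h3 : c k i.1 = c k' i.1 := by omega
      simp only [c, dif_pos i.2] at h3
      exact Fin.ext h3
    · rintro rfl i hi
      rw [card_append, hA _ _ hi, hB _ _ hi]
      have := hcj k i
      omega
  let P : Matrix (Fin n → K) (Fin r) ℂ := fun x t => ∏ p, u t (Fin.castAdd b p) (fun s => A (x s) p)
  let Q : Matrix (Fin r) (Fin n → K) ℂ := fun t y => ∏ p, u t (Fin.natAdd a p) (fun s => B (y s) p)
  have hPQ : P * Q = 1 := by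
    ext x y
    have h := hu (fun p s => Fin.append (A (x s)) (B (y s)) p)
    simp only [Fin.prod_univ_add, Fin.append_left, Fin.append_right] at h
    rw [Matrix.mul_apply]
    refine h.symm.trans ?_
    unfold DickePow
    simp only [hD]
    rw [Matrix.one_apply, Finset.prod_ite_zero]
    simp [funext_iff (f := x)]
  have h1 : Fintype.card (Fin n → K) ≤ r := by
    have h2 := (Matrix.rank_mul_le_left P Q).trans (Matrix.rank_le_card_width P)
    rwa [hPQ, Matrix.rank_one, Fintype.card_fin] at h2
  have h3 : Fintype.card (Fin n → K) = ∏ i ∈ Finset.univ.erase z, (j i + 1) ^ n := by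
    rw [Fintype.card_fun, Fintype.card_fin, Fintype.card_pi, Finset.prod_pow]
    simp only [Fintype.card_fin]
    congr 1
    exact (Finset.prod_subtype _ (by simp) (fun i => j i + 1)).symm
  rwa [h3] at h1
end

section
/- Let d ≥ 2 and j_1 ≥ ⋯ ≥ j_d ≥ 1 with N = j_1 + ⋯ + j_d, and suppose j_1 ≥ j_2 + ⋯ + j_d. Then the limit as n → ∞ of (log₂ rk(D(j_1,…,j_d)^{⊗n})) / n exists and equals Σ_{i=2}^d log₂(j_i + 1). (Equivalently, the SLOCC entanglement transformation rate R(GHZ_N, D(j_1,…,j_d)) equals (Σ_{i=2}^d log₂(j_i+1))^{−1}, since a state is reachable from GHZ_N^{⊗m} by SLOCC if and only if its tensor rank is at most 2^m.) -/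
lemma dicke_iff {d : ℕ} (z : Fin d) (j : Fin d → ℕ) (N : ℕ) (hN : N = ∑ i, j i)
    (s : Fin N → Fin d)
    (h : ∀ i : {i // i ≠ z}, (∑ p, if s p = i.1 then 1 else 0) = j i.1) :
    Dicke d j N s = 1 := by
  unfold Dicke
  rw [if_pos]
  have hne : ∀ i, i ≠ z → (Finset.univ.filter fun p => s p = i).card = j i := by
    intro i hi
    rw [Finset.card_filter]; exact h ⟨i, hi⟩
  intro i
  by_cases hi : i = z
  · subst hi
    have h1 : ∑ i', (Finset.univ.filter fun p => s p = i').card = N := by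
      have := Finset.card_eq_sum_card_fiberwise (s := (Finset.univ : Finset (Fin N)))
        (t := Finset.univ) (f := s) (by simp)
      simpa using this.symm
    rw [← Finset.add_sum_erase _ _ (Finset.mem_univ i)] at h1 hN
    have h2 : ∑ x ∈ Finset.univ.erase i, (Finset.univ.filter fun p => s p = x).card
        = ∑ x ∈ Finset.univ.erase i, j x :=
      Finset.sum_congr rfl fun x hx => hne x (Finset.ne_of_mem_erase hx)
    omega
  · exact hne i hi

lemma dicke_count {d : ℕ} (j : Fin d → ℕ) (N : ℕ)
    (s : Fin N → Fin d) (h : Dicke d j N s ≠ 0) (i : Fin d) :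
    (∑ p, if s p = i then 1 else 0) = j i := by
  unfold Dicke at h
  have := (ite_ne_right_iff.mp h).1 i
  rwa [Finset.card_filter] at this

lemma dicke_zero_one {d : ℕ} (j : Fin d → ℕ) (N : ℕ) (s : Fin N → Fin d) :
    Dicke d j N s = 0 ∨ Dicke d j N s = 1 := by
  unfold Dicke; split_ifs <;> simp

/-- the interpolating configuration -/
def cfg {d : ℕ} (z : Fin d) (j : Fin d → ℕ) (R : ℕ)
    (k k' : ∀ i : {i // i ≠ z}, Fin (j i.1 + 1)) :
    ((Σ i : {i // i ≠ z}, Fin (j i.1)) ⊕ (Σ i : {i // i ≠ z}, Fin (j i.1))) ⊕ Fin R → Fin d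
  | Sum.inl (Sum.inl a) => if a.2.1 < (k a.1).1 then a.1.1 else z
  | Sum.inl (Sum.inr a) => if a.2.1 < (k' a.1).1 then z else a.1.1
  | Sum.inr _ => z

lemma sum_lt_aux (m k : ℕ) (hk : k ≤ m) : (∑ x : Fin m, if x.1 < k then 1 else 0) = k := by
  rw [Fin.sum_univ_eq_sum_range (fun x => if x < k then 1 else 0) m, ← Finset.card_filter]
  have : (Finset.range m).filter (fun x => x < k) = Finset.range k := by
    ext x; simp; omega
  rw [this]; simp

lemma cfg_count {d : ℕ} (z : Fin d) (j : Fin d → ℕ) (R : ℕ)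
    (k k' : ∀ i : {i // i ≠ z}, Fin (j i.1 + 1)) (i : {i // i ≠ z}) :
    (∑ p, if cfg z j R k k' p = i.1 then 1 else 0) + (k' i).1 = (k i).1 + j i.1 := by
  have hz : z ≠ i.1 := fun h => i.2 h.symm
  rw [Fintype.sum_sum_type, Fintype.sum_sum_type, Fintype.sum_sigma, Fintype.sum_sigma]
  have h1 : ∀ x : {i // i ≠ z}, (∑ y : Fin (j x.1),
      if cfg z j R k k' (Sum.inl (Sum.inl ⟨x, y⟩)) = i.1 then 1 else 0)
      = if x = i then (k i).1 else 0 := by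
    intro x
    split_ifs with hx
    · subst hx
      rw [← sum_lt_aux (j x.1) (k x).1 (by have := (k x).2; omega)]
      apply Finset.sum_congr rfl
      intro y _
      simp only [cfg]
      split_ifs <;> simp_all
    · apply Finset.sum_eq_zero
      intro y _
      have hx' : x.1 ≠ i.1 := fun h => hx (Subtype.ext h)
      simp only [cfg]
      split_ifs <;> simp_all
  have h2 : ∀ x : {i // i ≠ z}, (∑ y : Fin (j x.1),
      if cfg z j R k k' (Sum.inl (Sum.inr ⟨x, y⟩)) = i.1 then 1 else 0)
      = if x = i then j i.1 - (k' i).1 else 0 := by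
    intro x
    split_ifs with hx
    · subst hx
      have e := sum_lt_aux (j x.1) (k' x).1 (by have := (k' x).2; omega)
      have e2 : (∑ y : Fin (j x.1),
        if cfg z j R k k' (Sum.inl (Sum.inr ⟨x, y⟩)) = x.1 then 1 else 0)
        + (∑ y : Fin (j x.1), if y.1 < (k' x).1 then 1 else 0) = j x.1 := by
        rw [← Finset.sum_add_distrib]
        trans ∑ y : Fin (j x.1), 1
        · apply Finset.sum_congr rfl
          intro y _
          simp only [cfg]
          split_ifs <;> simp_all
        · simp
      omega
    · apply Finset.sum_eq_zero
      intro y _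
      have hx' : x.1 ≠ i.1 := fun h => hx (Subtype.ext h)
      simp only [cfg]
      split_ifs <;> simp_all
  simp only [h1, h2]
  have := (k' i).2
  simp [cfg, hz]
  omega

lemma lower {d : ℕ} (z : Fin d) (j : Fin d → ℕ) (N n r : ℕ) (hN : N = ∑ i, j i)
    (hbig : ∑ i ∈ Finset.univ.erase z, j i ≤ j z)
    (u : Fin r → Fin N → (Fin n → Fin d) → ℂ)
    (hu : ∀ α : Fin N → Fin n → Fin d, DickePow d j N n α = ∑ t, ∏ p, u t p (α p)) :
    (∏ i ∈ Finset.univ.erase z, (j i + 1)) ^ n ≤ r := by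
  classical
  have hsub : ∑ i ∈ Finset.univ.erase z, j i = ∑ i : {i // i ≠ z}, j i.1 :=
    Finset.sum_subtype _ (by simp) _
  have hprod : ∏ i ∈ Finset.univ.erase z, (j i + 1) = ∏ i : {i // i ≠ z}, (j i.1 + 1) :=
    Finset.prod_subtype _ (by simp) _
  have hN' : N = j z + ∑ i ∈ Finset.univ.erase z, j i := by
    rw [hN, Finset.add_sum_erase _ _ (Finset.mem_univ z)]
  set J := ∑ i ∈ Finset.univ.erase z, j i with hJ
  let R := N - 2 * J
  let P := ((Σ i : {i // i ≠ z}, Fin (j i.1)) ⊕ (Σ i : {i // i ≠ z}, Fin (j i.1))) ⊕ Fin R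
  have hcard : Fintype.card P = Fintype.card (Fin N) := by
    simp only [P, Fintype.card_sum, Fintype.card_sigma, Fintype.card_fin, ← hsub]
    omega
  let e : P ≃ Fin N := Fintype.equivOfCardEq hcard
  let K := ∀ i : {i // i ≠ z}, Fin (j i.1 + 1)
  let α : (Fin n → K) → (Fin n → K) → Fin N → Fin n → Fin d :=
    fun k k' p τ => cfg z j R (k τ) (k' τ) (e.symm p)
  have hcnt : ∀ (k k' : K) (i : {i // i ≠ z}),
      (∑ p, if cfg z j R k k' (e.symm p) = i.1 then 1 else 0) + (k' i).1 = (k i).1 + j i.1 := by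
    intro k k' i
    rw [← cfg_count z j R k k' i, Equiv.sum_comp e.symm (fun p => if cfg z j R k k' p = i.1 then 1 else 0)]
  have hD : ∀ k k', DickePow d j N n (α k k') = (1 : Matrix (Fin n → K) (Fin n → K) ℂ) k k' := by
    intro k k'
    rw [Matrix.one_apply]
    unfold DickePow
    split_ifs with h
    · subst h
      apply Finset.prod_eq_one
      intro τ _
      apply dicke_iff z j N hN
      intro i
      have := hcnt (k τ) (k τ) i
      simp only [α]
      omega
    · by_contra hne
      apply h
      have := Finset.prod_ne_zero_iff.mp hne
      funext τ i
      have h1 := dicke_count j N _ (this τ (Finset.mem_univ _)) i.1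
      have h2 := hcnt (k τ) (k' τ) i
      simp only [α] at h1
      apply Fin.ext
      omega
  let A : Matrix (Fin n → K) (Fin r) ℂ := fun k t =>
    ∏ a, u t (e (Sum.inl (Sum.inl a))) (fun τ => cfg z j R (k τ) (k τ) (Sum.inl (Sum.inl a)))
  let B : Matrix (Fin r) (Fin n → K) ℂ := fun t k =>
    (∏ a, u t (e (Sum.inl (Sum.inr a))) (fun τ => cfg z j R (k τ) (k τ) (Sum.inl (Sum.inr a)))) *
    ∏ a, u t (e (Sum.inr a)) (fun τ => cfg z j R (k τ) (k τ) (Sum.inr a))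
  have hAB : A * B = 1 := by
    ext k k'
    rw [← hD, hu, Matrix.mul_apply]
    apply Finset.sum_congr rfl
    intro t _
    rw [← Equiv.prod_comp e, Fintype.prod_sum_type, Fintype.prod_sum_type]
    simp [A, B, α, cfg, mul_assoc]
  have hr : (A * B).rank ≤ r := by
    refine (Matrix.rank_mul_le_left A B).trans ?_
    simpa using Matrix.rank_le_card_width A
  rw [hAB, Matrix.rank_one] at hr
  rw [hprod]
  simpa [K, Fintype.card_pi] using hr

lemma add_char_sum {G : Type} [AddCommGroup G] (ψ : AddChar G ℂ) {N : ℕ} (g : Fin N → G) :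
    ψ (∑ p, g p) = ∏ p, ψ (g p) := by
  classical
  induction (Finset.univ : Finset (Fin N)) using Finset.induction_on with
  | empty => simp
  | insert a s ha ih => rw [Finset.sum_insert ha, Finset.prod_insert ha, AddChar.map_add_eq_mul, ih]

lemma char_rank {G X : Type} [AddCommGroup G] [Fintype G] [DecidableEq G] (N : ℕ) (hN : 0 < N)
    (f : Fin N → X → G) (a : G) :
    ∃ u : Fin (Fintype.card G) → Fin N → X → ℂ, ∀ α : Fin N → X,
      (if ∑ p, f p (α p) = a then 1 else 0) = ∑ t, ∏ p, u t p (α p) := by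
  classical
  have hc : Fintype.card (AddChar G ℂ) = Fintype.card (Fin (Fintype.card G)) := by
    rw [← Nat.card_eq_fintype_card, ← Nat.card_eq_fintype_card, Nat.card_eq_fintype_card (α := Fin _)]
    simp [AddChar.card_eq]
  let e : AddChar G ℂ ≃ Fin (Fintype.card G) := Fintype.equivOfCardEq hc
  have hG : (Fintype.card G : ℂ) ≠ 0 := by simp
  refine ⟨fun t p x => (if p = ⟨0, hN⟩ then (Fintype.card G : ℂ)⁻¹ * (e.symm t) (-a) else 1) *
    (e.symm t) (f p x), fun α => ?_⟩
  rw [← Equiv.sum_comp e]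
  have : ∀ ψ : AddChar G ℂ, (∏ p, (if p = ⟨0, hN⟩ then (Fintype.card G : ℂ)⁻¹ * ψ (-a) else 1) *
      ψ (f p (α p))) = (Fintype.card G : ℂ)⁻¹ * ψ (∑ p, f p (α p) - a) := by
    intro ψ
    rw [Finset.prod_mul_distrib, sub_eq_add_neg, AddChar.map_add_eq_mul, add_char_sum]
    simp
    ring
  simp only [Equiv.symm_apply_apply, this]
  rw [← Finset.mul_sum, AddChar.sum_apply_eq_ite]
  simp only [sub_eq_zero]
  split_ifs <;> simp

lemma upper {d : ℕ} (z : Fin d) (j : Fin d → ℕ) (N n : ℕ) (hN : N = ∑ i, j i) (hN0 : 0 < N) :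
    ∃ u : Fin ((n * N + 1) * (∏ i ∈ Finset.univ.erase z, (j i + 1)) ^ n) → Fin N →
      (Fin n → Fin d) → ℂ,
    ∀ α : Fin N → Fin n → Fin d, DickePow d j N n α = ∑ t, ∏ p, u t p (α p) := by
  classical
  have hsub : ∑ i ∈ Finset.univ.erase z, j i = ∑ i : {i // i ≠ z}, j i.1 :=
    Finset.sum_subtype _ (by simp) _
  have hprod : ∏ i ∈ Finset.univ.erase z, (j i + 1) = ∏ i : {i // i ≠ z}, (j i.1 + 1) :=
    Finset.prod_subtype _ (by simp) _
  have hN' : N = j z + ∑ i ∈ Finset.univ.erase z, j i := by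
    rw [hN, Finset.add_sum_erase _ _ (Finset.mem_univ z)]
  set J := ∑ i ∈ Finset.univ.erase z, j i with hJ
  let G := ZMod (n * N + 1) × (Fin n → ∀ i : {i // i ≠ z}, ZMod (j i.1 + 1))
  have hG : Fintype.card G = (n * N + 1) * (∏ i ∈ Finset.univ.erase z, (j i + 1)) ^ n := by
    simp [G, hprod, ZMod.card]
  obtain ⟨u, hu⟩ := char_rank (G := G) (X := Fin n → Fin d) N hN0
    (fun p x => (((∑ τ, ∑ i : {i // i ≠ z}, if x τ = i.1 then 1 else 0 : ℕ) : ZMod (n * N + 1)),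
      fun τ i => ((if x τ = i.1 then 1 else 0 : ℕ) : ZMod (j i.1 + 1))))
    (((n * J : ℕ) : ZMod (n * N + 1)), fun τ i => ((j i.1 : ℕ) : ZMod (j i.1 + 1)))
  rw [← hG]
  refine ⟨u, fun α => ?_⟩
  rw [← hu]
  let c : Fin n → {i // i ≠ z} → ℕ := fun τ i => ∑ p, if α p τ = i.1 then 1 else 0
  have hiff : (∑ p, ((((∑ τ, ∑ i : {i // i ≠ z}, if α p τ = i.1 then 1 else 0 : ℕ) : ZMod (n * N + 1)),
      fun (τ : Fin n) (i : {i // i ≠ z}) => ((if α p τ = i.1 then 1 else 0 : ℕ) : ZMod (j i.1 + 1))) : G) =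
      ((((n * J : ℕ) : ZMod (n * N + 1)), fun (_ : Fin n) (i : {i // i ≠ z}) => ((j i.1 : ℕ) : ZMod (j i.1 + 1))) : G)) ↔
      ∀ τ i, c τ i = j i.1 := by
    have hswap : ∑ p, ∑ τ, ∑ i : {i // i ≠ z}, (if α p τ = i.1 then 1 else 0) = ∑ τ, ∑ i, c τ i := by
      rw [Finset.sum_comm]
      apply Finset.sum_congr rfl; intro τ _
      rw [Finset.sum_comm]
    rw [Prod.ext_iff, Prod.fst_sum, Prod.snd_sum]
    dsimp only
    rw [← Nat.cast_sum, hswap]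
    constructor
    · rintro ⟨h1, h2⟩
      have hle : ∑ τ, ∑ i, c τ i ≤ n * N := by
        rw [← hswap, Finset.sum_comm]
        have : ∀ τ, ∑ p, ∑ i : {i // i ≠ z}, (if α p τ = i.1 then 1 else 0) ≤ N := by
          intro τ
          calc _ ≤ ∑ p : Fin N, 1 := by
                apply Finset.sum_le_sum
                intro p _
                rw [← Finset.card_filter, Finset.card_le_one]
                intro a ha b hb
                simp at ha hb
                exact Subtype.ext (ha.symm.trans hb)
            _ = N := by simp
        calc _ ≤ ∑ τ : Fin n, N := Finset.sum_le_sum fun τ _ => this τ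
          _ = _ := by simp
      have hle2 : n * J ≤ n * N := Nat.mul_le_mul_left _ (by omega)
      rw [ZMod.natCast_eq_natCast_iff'] at h1
      rw [Nat.mod_eq_of_lt (by omega), Nat.mod_eq_of_lt (by omega)] at h1
      have hge : ∀ τ i, j i.1 ≤ c τ i := by
        intro τ i
        have := congrFun (congrFun h2 τ) i
        simp only [Finset.sum_apply] at this
        rw [← Nat.cast_sum, ZMod.natCast_eq_natCast_iff'] at this
        change c τ i % _ = _ at this
        rw [Nat.mod_eq_of_lt (Nat.lt_succ_self (j i.1))] at this
        rw [← this]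
        exact Nat.mod_le _ _
      have heq : ∑ τ : Fin n, ∑ i : {i // i ≠ z}, j i.1 = ∑ τ, ∑ i, c τ i := by
        rw [h1, ← hsub]; simp
      have h3 := (Finset.sum_eq_sum_iff_of_le (fun τ _ => Finset.sum_le_sum fun i _ => hge τ i)).mp heq
      intro τ i
      have h4 := (Finset.sum_eq_sum_iff_of_le (fun i _ => hge τ i)).mp (h3 τ (Finset.mem_univ _))
      exact (h4 i (Finset.mem_univ _)).symm
    · intro h
      refine ⟨?_, ?_⟩
      · simp only [h, ← hsub]; simp
      · funext τ i
        simp only [Finset.sum_apply]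
        rw [← Nat.cast_sum]
        change ((c τ i : ℕ) : ZMod (j i.1 + 1)) = _
        rw [h]
  by_cases hc : ∀ τ i, c τ i = j i.1
  · rw [if_pos (hiff.mpr hc)]
    unfold DickePow
    apply Finset.prod_eq_one
    intro τ _
    exact dicke_iff z j N hN _ (hc τ)
  · rw [if_neg (fun h => hc (hiff.mp h))]
    by_contra hne
    apply hc
    intro τ i
    exact dicke_count j N _ (Finset.prod_ne_zero_iff.mp hne τ (Finset.mem_univ _)) i.1

lemma log_aux (N : ℕ) : Filter.Tendsto (fun n : ℕ => Real.logb 2 ((n : ℝ) * N + 1) / n)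
    Filter.atTop (nhds 0) := by
  have h0 : Filter.Tendsto (fun n : ℕ => Real.log (n : ℝ) / n) Filter.atTop (nhds 0) :=
    (Real.isLittleO_log_id_atTop.tendsto_div_nhds_zero).comp tendsto_natCast_atTop_atTop
  have h1 : Filter.Tendsto (fun n : ℕ => Real.log ((N : ℝ) + 1) / n) Filter.atTop (nhds 0) :=
    tendsto_const_div_atTop_nhds_zero_nat _
  have h2 : Filter.Tendsto (fun n : ℕ => (Real.log ((n : ℝ)) / n + Real.log ((N : ℝ) + 1) / n) / Real.log 2)
      Filter.atTop (nhds 0) := by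
    simpa using (h0.add h1).div_const (Real.log 2)
  have hl2 : 0 < Real.log 2 := Real.log_pos (by norm_num)
  refine squeeze_zero' ?_ ?_ h2
  · filter_upwards with n
    apply div_nonneg _ (Nat.cast_nonneg _)
    apply Real.logb_nonneg (by norm_num)
    have : (0 : ℝ) ≤ (n : ℝ) * N := by positivity
    linarith
  · filter_upwards [Filter.eventually_ge_atTop 1] with n hn
    have hn' : (1 : ℝ) ≤ n := by exact_mod_cast hn
    have h3 : Real.log ((n : ℝ) * N + 1) ≤ Real.log n + Real.log (N + 1) := by
      rw [← Real.log_mul (by positivity) (by positivity)]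
      apply Real.log_le_log (by positivity)
      nlinarith
    rw [Real.logb, ← add_div, div_right_comm]
    gcongr

theorem log_rank_DickePow_div_n_tendsto (d : ℕ) (hd : 2 ≤ d) (j : Fin d → ℕ)
    (hmono : Antitone j) (hpos : ∀ i, 1 ≤ j i) (N : ℕ) (hN : N = ∑ i, j i)
    (hbig : ∑ i ∈ Finset.univ.erase (⟨0, by omega⟩ : Fin d), j i ≤ j ⟨0, by omega⟩) :
    Filter.Tendsto (fun n : ℕ => Real.logb 2 (rkDickePow d j N n) / n) Filter.atTop
      (nhds (∑ i ∈ Finset.univ.erase (⟨0, by omega⟩ : Fin d), Real.logb 2 (j i + 1))) := by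
  set z : Fin d := ⟨0, by omega⟩ with hz
  have hN0 : 0 < N := by
    have := Finset.add_sum_erase Finset.univ j (Finset.mem_univ z)
    have := hpos z
    omega
  set C : ℕ := ∏ i ∈ Finset.univ.erase z, (j i + 1) with hC
  have hC0 : 0 < C := Finset.prod_pos fun i _ => Nat.succ_pos _
  have hlim : (∑ i ∈ Finset.univ.erase z, Real.logb 2 (j i + 1)) = Real.logb 2 C := by
    rw [hC]
    push_cast
    rw [Real.logb_prod]
    intro i _
    positivity
  rw [hlim]
  have hup : ∀ n, rkDickePow d j N n ≤ (n * N + 1) * C ^ n := fun n =>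
    Nat.sInf_le (upper z j N n hN hN0)
  have hlo : ∀ n, C ^ n ≤ rkDickePow d j N n := by
    intro n
    obtain ⟨u, hu⟩ := Nat.sInf_mem (s := {r : ℕ | ∃ u : Fin r → Fin N → (Fin n → Fin d) → ℂ,
      ∀ α : Fin N → Fin n → Fin d, DickePow d j N n α = ∑ t, ∏ p, u t p (α p)})
      ⟨_, upper z j N n hN hN0⟩
    exact lower z j N n _ hN hbig u hu
  have hCr : (0 : ℝ) < C := by exact_mod_cast hC0
  have hlim2 : Filter.Tendsto (fun n : ℕ => Real.logb 2 ((n : ℝ) * N + 1) / n + Real.logb 2 C)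
      Filter.atTop (nhds (Real.logb 2 C)) := by
    simpa using (log_aux N).add_const (Real.logb 2 C)
  refine tendsto_of_tendsto_of_tendsto_of_le_of_le' tendsto_const_nhds hlim2 ?_ ?_
  · filter_upwards [Filter.eventually_ge_atTop 1] with n hn
    have hn' : (0 : ℝ) < n := by exact_mod_cast hn
    rw [le_div_iff₀ hn', mul_comm, ← Real.logb_pow]
    apply Real.logb_le_logb_of_le (by norm_num) (by positivity)
    exact_mod_cast hlo n
  · filter_upwards [Filter.eventually_ge_atTop 1] with n hn
    have hn' : (0 : ℝ) < n := by exact_mod_cast hn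
    rw [div_add' _ _ _ hn'.ne', mul_comm (Real.logb 2 C), ← Real.logb_pow,
      ← Real.logb_mul (by positivity) (by positivity)]
    gcongr
    · norm_num
    · exact_mod_cast (pow_pos hC0 n).trans_le (hlo n)
    · exact_mod_cast hup n
end

section
/- For every N ≥ 1, the tensor rank of the permutation tensor D(1,…,1) (with N parties) is at least the binomial coefficient C(N, ⌊N/2⌋); that is, if vectors u_{t,p} : {1,…,N} → ℂ (1 ≤ t ≤ r, 1 ≤ p ≤ N) satisfy, for all (s_1,…,s_N) ∈ ({1,…,N})^N, Σ_{t=1}^r ∏_{p=1}^N u_{t,p}(s_p) = 1 if (s_1,…,s_N) is a permutation of (1,…,N) and = 0 otherwise, then r ≥ C(N, ⌊N/2⌋). -/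
/-- any rank-r decomposition of the N-party permutation tensor
D(1,…,1) (entry 1 at (s_1,…,s_N) iff p ↦ s_p is a bijection of {1,…,N}, and 0
otherwise) satisfies r ≥ C(N, ⌊N/2⌋). -/
theorem permutation_tensor_rank_ge (N : ℕ) (hN : 1 ≤ N) (r : ℕ)
    (u : Fin r → Fin N → Fin N → ℂ)
    (hu : ∀ s : Fin N → Fin N,
      (∑ t, ∏ p, u t p (s p)) = if Function.Bijective s then 1 else 0) :
    N.choose (N / 2) ≤ r := by
  classical
  obtain ⟨P, -, hP⟩ := Finset.exists_subset_card_eq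
    (s := (Finset.univ : Finset (Fin N))) (n := N / 2) (by simp; omega)
  have key : ∀ S : {S : Finset (Fin N) // S.card = N / 2},
      ∃ σ : Equiv.Perm (Fin N), ∀ x, σ x ∈ S.1 ↔ x ∈ P := by
    rintro ⟨S, hS⟩
    let e : {x // x ∈ P} ≃ {x // x ∈ S} := Finset.equivOfCardEq (hP.trans hS.symm)
    refine ⟨e.extendSubtype, fun x => ⟨fun h => ?_, fun h => e.extendSubtype_mem x h⟩⟩
    by_contra hx
    exact e.extendSubtype_not_mem x hx h
  choose σ hσ using key
  let A : Matrix {S : Finset (Fin N) // S.card = N / 2} (Fin r) ℂ :=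
    fun S t => ∏ p, if p ∈ P then u t p (σ S p) else 1
  let B : Matrix (Fin r) {S : Finset (Fin N) // S.card = N / 2} ℂ :=
    fun t S => ∏ p, if p ∈ P then 1 else u t p (σ S p)
  have hAB : A * B = 1 := by
    ext S S'
    have h1 : (A * B) S S' = ∑ t, ∏ p, u t p (if p ∈ P then σ S p else σ S' p) := by
      rw [Matrix.mul_apply]
      refine Finset.sum_congr rfl fun t _ => ?_
      simp only [A, B]
      rw [← Finset.prod_mul_distrib]
      refine Finset.prod_congr rfl fun p _ => ?_
      split_ifs <;> simp
    rw [h1, hu (fun p => if p ∈ P then σ S p else σ S' p), Matrix.one_apply]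
    have h2 : Function.Bijective (fun p => if p ∈ P then σ S p else σ S' p) ↔ S = S' := by
      constructor
      · intro hb
        apply Subtype.ext
        apply Finset.eq_of_subset_of_card_le _ (by rw [S.2, S'.2])
        intro y hy
        by_contra hy'
        have ha : (σ S).symm y ∈ P := by rw [← hσ S]; simpa using hy
        have hc : (σ S').symm y ∉ P := by rw [← hσ S']; simpa using hy'
        have := @hb.1 ((σ S).symm y) ((σ S').symm y) (by simp [ha, hc])
        exact hc (this ▸ ha)
      · rintro rfl
        simpa using (σ S).bijective
    simp only [h2]
  have hr : (A * B).rank ≤ r :=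
    (Matrix.rank_mul_le_left A B).trans ((Matrix.rank_le_card_width A).trans (by simp))
  rw [hAB, Matrix.rank_one] at hr
  simpa using hr
end

section
/- Let N ≥ 1 and suppose complex coefficients a^{(j)}_{i,k} (1 ≤ i,k ≤ N, 1 ≤ j ≤ K) satisfy, for every N×N complex matrix X, perm(X) = Σ_{j=1}^{K} ∏_{i=1}^{N} (Σ_{k=1}^{N} a^{(j)}_{i,k} X_{i,k}). Then K ≥ C(N, ⌊N/2⌋), where C(N, ⌊N/2⌋) is the central binomial coefficient. -/
/-- The permanent of an N×N complex matrix. -/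
noncomputable def perm (N : ℕ) (X : Matrix (Fin N) (Fin N) ℂ) : ℂ :=
  ∑ σ : Equiv.Perm (Fin N), ∏ i, X i (σ i)

/-- Any two finsets of the same size are related by a permutation. -/
lemma exists_perm_image_aux {N : ℕ} (A S : Finset (Fin N)) (h : A.card = S.card) :
    ∃ σ : Equiv.Perm (Fin N), A.image σ = S := by
  classical
  have e : {x // x ∈ A} ≃ {x // x ∈ S} := Finset.equivOfCardEq h
  refine ⟨e.extendSubtype, ?_⟩
  apply Finset.eq_of_subset_of_card_le
  · intro y hy
    obtain ⟨x, hx, rfl⟩ := Finset.mem_image.1 hy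
    exact e.extendSubtype_mem x hx
  · rw [Finset.card_image_of_injective _ (Equiv.injective _), h]

/-- if coefficients a⁽ʲ⁾_{i,k} give a decomposition of the permanent into
K products of row-wise linear forms, perm(X) = Σ_j ∏_i (Σ_k a⁽ʲ⁾_{i,k} X_{i,k}) for all X,
then K ≥ C(N, ⌊N/2⌋). -/
theorem permanent_decomposition_ge (N : ℕ) (hN : 1 ≤ N) (K : ℕ)
    (a : Fin K → Fin N → Fin N → ℂ)
    (ha : ∀ X : Matrix (Fin N) (Fin N) ℂ,
      perm N X = ∑ j, ∏ i, ∑ k, a j i k * X i k) :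
    N.choose (N / 2) ≤ K := by
  classical
  obtain ⟨A, -, hA⟩ := Finset.exists_subset_card_eq (s := (Finset.univ : Finset (Fin N)))
    (n := N / 2) (by simp; omega)
  have hex : ∀ S : {S : Finset (Fin N) // S.card = N / 2},
      ∃ σ : Equiv.Perm (Fin N), A.image σ = S.1 := fun S =>
    exists_perm_image_aux A S.1 (hA.trans S.2.symm)
  choose p hp using hex
  let U : Matrix {S : Finset (Fin N) // S.card = N / 2} (Fin K) ℂ :=
    fun S j => ∏ i ∈ A, a j i (p S i)
  let V : Matrix (Fin K) {S : Finset (Fin N) // S.card = N / 2} ℂ :=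
    fun j T => ∏ i ∈ Aᶜ, a j i (p T i)
  have key : U * V = 1 := by
    ext S T
    let h : Fin N → Fin N := fun i => if i ∈ A then p S i else p T i
    have h1 := ha (fun i k => if k = h i then 1 else 0)
    have h2 : (U * V) S T = ∑ j, ∏ i, ∑ k, a j i k * (if k = h i then (1 : ℂ) else 0) := by
      rw [Matrix.mul_apply]
      refine Finset.sum_congr rfl fun j _ => ?_
      simp only [mul_ite, mul_one, mul_zero, Finset.sum_ite_eq', Finset.mem_univ, if_true]
      rw [← Finset.prod_mul_prod_compl A]
      congr 1
      · exact Finset.prod_congr rfl fun i hi => by simp [h, hi]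
      · exact Finset.prod_congr rfl fun i hi => by simp [h, Finset.mem_compl.1 hi]
    rw [h2]
    refine h1.symm.trans ?_
    unfold perm
    have h3 : ∀ σ : Equiv.Perm (Fin N), (∏ i, if σ i = h i then (1 : ℂ) else 0)
        = if (∀ i, σ i = h i) then 1 else 0 := by
      intro σ
      rw [Finset.prod_ite_zero]
      simp
    simp only [h3]
    by_cases hST : S = T
    · subst hST
      have : ∀ σ : Equiv.Perm (Fin N), (∀ i, σ i = h i) ↔ σ = p S := by
        intro σ
        simp [h, Equiv.ext_iff]
      simp [this]
    · rw [Matrix.one_apply_ne hST]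
      refine Finset.sum_eq_zero fun σ _ => if_neg fun hσ => hST ?_
      apply Subtype.ext
      rw [← hp S, ← hp T]
      have e1 : A.image (p S) = A.image σ :=
        Finset.image_congr fun i hi => by
          have hi' : i ∈ A := hi
          simp [hσ, h, hi']
      have e2 : Aᶜ.image (p T) = Aᶜ.image σ :=
        Finset.image_congr fun i hi => by
          have hi' : i ∉ A := Finset.mem_compl.1 hi
          simp [hσ, h, hi']
      have hc : ∀ q : Equiv.Perm (Fin N), Aᶜ.image q = (A.image q)ᶜ := by
        intro q
        apply Finset.coe_injective
        push_cast
        exact Set.image_compl_eq q.bijective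
      rw [hc, hc] at e2
      rw [e1, compl_injective e2]
  have r := Matrix.rank_mul_le_left U V
  rw [key, Matrix.rank_one, Fintype.card_finset_len, Fintype.card_fin] at r
  exact r.trans ((Matrix.rank_le_card_width U).trans (by simp))
end
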